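/- arXiv:math/9909053 — 2 statements merged into one kernel-verified Lean document; each statement's English description precedes it below -/
import Mathlib

section
/- (Bressoud's even-modulus identities.) Let q be a complex number with 0 < |q| < 1, and let k ≥ 2 and 0 ≤ i ≤ k-1 be integers. Then ∑_{s_1 ≥ s_2 ≥ ⋯ ≥ s_{k-1} ≥ 0} q^{s_1^2 + ⋯ + s_{k-1}^2 + s_{k-i} + ⋯ + s_{k-1}} / [(q;q)_{s_1-s_2} ⋯ (q;q)_{s_{k-2}-s_{k-1}} (q^2;q^2)_{s_{k-1}}] = (q^{2k}, q^{k-i}, q^{k+i}; q^{2k})_∞ / (q;q)_∞, where the linear term s_{k-i} + ⋯ + s_{k-1} is empty (equal to 0) when i = 0. -/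
/-- The finite q-Pochhammer symbol `(x;q)_n = ∏_{j=0}^{n-1} (1 - x q^j)`. -/
noncomputable def qPoch (x q : ℂ) (n : ℕ) : ℂ := ∏ j ∈ Finset.range n, (1 - x * q ^ j)

/-- The infinite q-Pochhammer symbol `(x;q)_∞ = ∏_{j=0}^{∞} (1 - x q^j)`. -/
noncomputable def qPochInf (x q : ℂ) : ℂ := ∏' j : ℕ, (1 - x * q ^ j)

open Filter Topology

/-- Reciprocal of `(q;q)_m`, extended by zero to negative `m`. -/
noncomputable def PP (q : ℂ) (m : ℤ) : ℂ := if m < 0 then 0 else (qPoch q q m.toNat)⁻¹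

lemma one_sub_pow_ne {q : ℂ} (h1 : ‖q‖ < 1) (n : ℕ) (hn : n ≠ 0) : 1 - q ^ n ≠ 0 := by
  intro h
  have h2 : q ^ n = 1 := (sub_eq_zero.mp h).symm
  have h3 : ‖q‖ ^ n = 1 := by rw [← norm_pow, h2, norm_one]
  have := pow_lt_one₀ (norm_nonneg q) h1 hn
  linarith

lemma one_sub_zpow_ne {q : ℂ} (h1 : ‖q‖ < 1) (n : ℤ) (hn : 0 < n) : 1 - q ^ n ≠ 0 := by
  lift n to ℕ using hn.le
  rw [zpow_natCast]
  exact one_sub_pow_ne h1 n (by omega)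

lemma qPoch_ne {q : ℂ} (h1 : ‖q‖ < 1) (n : ℕ) : qPoch q q n ≠ 0 := by
  unfold qPoch
  refine Finset.prod_ne_zero_iff.mpr fun j _ => ?_
  rw [← pow_succ']
  exact one_sub_pow_ne h1 _ (by omega)

lemma PP_neg (q : ℂ) {m : ℤ} (h : m < 0) : PP q m = 0 := by simp [PP, h]

lemma PP_nat (q : ℂ) (m : ℕ) : PP q (m : ℤ) = (qPoch q q m)⁻¹ := by simp [PP]

lemma PP_zero (q : ℂ) : PP q 0 = 1 := by simp [PP, qPoch]

lemma PP_rec {q : ℂ} (h1 : ‖q‖ < 1) (m : ℤ) : (1 - q ^ m) * PP q m = PP q (m - 1) := by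
  rcases lt_trichotomy m 0 with h | h | h
  · rw [PP_neg q h, PP_neg q (by omega), mul_zero]
  · subst h
    rw [PP_neg q (by omega : (0:ℤ) - 1 < 0)]; simp
  · obtain ⟨n, rfl⟩ : ∃ n : ℕ, m = (n : ℤ) + 1 := ⟨(m - 1).toNat, by omega⟩
    have e : ((n : ℤ) + 1) = ((n + 1 : ℕ) : ℤ) := by push_cast; ring
    rw [add_sub_cancel_right, PP_nat, e, PP_nat, zpow_natCast]
    have : qPoch q q (n + 1) = qPoch q q n * (1 - q ^ (n + 1)) := by
      unfold qPoch; rw [Finset.prod_range_succ, ← pow_succ']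
    rw [this, mul_inv]
    have := one_sub_pow_ne h1 (n + 1) (by omega)
    field_simp

lemma PP_supp {q : ℂ} {m : ℤ} (h : PP q m ≠ 0) : 0 ≤ m := by
  by_contra h'
  exact h (PP_neg q (by omega))

lemma summ_fin (q : ℂ) (a : ℤ → ℂ) (M L : ℤ) :
    Summable fun r : ℤ => a r * (PP q (M - r) * PP q (L + r)) := by
  apply summable_of_hasFiniteSupport
  refine (Set.finite_Icc (-L) M).subset ?_
  intro r hr
  have h := right_ne_zero_of_mul hr
  have h2 := PP_supp (left_ne_zero_of_mul h)
  have h3 := PP_supp (right_ne_zero_of_mul h)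
  constructor <;> omega

lemma tsum_shift (f : ℤ → ℂ) (c : ℤ) : ∑' r, f (r + c) = ∑' r, f r :=
  (Equiv.addRight c).tsum_eq f

lemma vand {q : ℂ} (h0 : q ≠ 0) (h1 : ‖q‖ < 1) (M : ℕ) : ∀ L : ℤ,
    ∑' m : ℤ, (q ^ (m ^ 2 + L * m) * PP q (m + L)) * (PP q (M - m) * PP q (0 + m)) =
      PP q M * PP q (M + L) := by
  induction M with
  | zero =>
    intro L
    rw [tsum_eq_single 0]
    · simp [PP_zero]
    · intro m hm
      rcases lt_or_gt_of_ne hm with h | h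
      · rw [PP_neg q (show 0 + m < 0 by omega)]; simp
      · rw [PP_neg q (show ((0 : ℕ) : ℤ) - m < 0 by push_cast; omega)]; simp
  | succ M ih =>
    intro L
    have hM := one_sub_zpow_ne h1 ((M + 1 : ℕ) : ℤ) (by omega)
    apply mul_left_cancel₀ hM
    have e1 : (1 - q ^ ((M + 1 : ℕ) : ℤ)) * (PP q ((M + 1 : ℕ) : ℤ) * PP q (((M + 1 : ℕ) : ℤ) + L))
        = PP q M * PP q (M + L) + q ^ (L + M + 1) * (PP q M * PP q (M + (L + 1))) := by
      rw [← mul_assoc, PP_rec h1]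
      have := PP_rec h1 (M + L + 1 : ℤ)
      rw [show (M + L + 1 - 1 : ℤ) = M + L by ring] at this
      rw [← this]
      push_cast
      rw [show (M + 1 - 1 : ℤ) = M by ring, show (M + 1 + L : ℤ) = M + L + 1 by ring,
        show (M + (L + 1) : ℤ) = M + L + 1 by ring, show (L + M + 1 : ℤ) = M + L + 1 by ring]
      ring
    rw [e1, ← ih L, ← ih (L + 1), ← tsum_mul_left, ← tsum_mul_left]
    rw [← tsum_shift (fun m => q ^ (L + M + 1) * _) (-1)]
    rw [← Summable.tsum_add]
    · congr 1; ext m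
      have r1 := PP_rec h1 ((M + 1 : ℕ) - m : ℤ)
      have r2 := PP_rec h1 m
      rw [show (((M + 1 : ℕ) : ℤ) - m - 1) = M - m by push_cast; ring] at r1
      rw [← r1, show (0 + (m + -1) : ℤ) = m - 1 by ring, ← r2, 
        show (M - (m + -1) : ℤ) = (M + 1 : ℕ) - m by push_cast; ring,
        show (m + -1 + (L + 1) : ℤ) = m + L by ring, zero_add]
      have z1 : q ^ ((M + 1 : ℕ) : ℤ) = q ^ ((M + 1 : ℕ) - m : ℤ) * q ^ m := by
        rw [← zpow_add₀ h0]; congr 1; ring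
      have z2 : q ^ (L + M + 1) * q ^ ((m + -1) ^ 2 + (L + 1) * (m + -1)) =
          q ^ (m ^ 2 + L * m) * q ^ ((M + 1 : ℕ) - m : ℤ) := by
        rw [← zpow_add₀ h0, ← zpow_add₀ h0]; congr 1; push_cast; ring
      rw [z1]
      linear_combination (-(PP q (m + L) * (PP q ((M + 1 : ℕ) - m : ℤ) * ((1 - q ^ m) * PP q m)))) * z2
    · exact summ_fin q _ _ _
    · have := (summ_fin q (fun m => q ^ (L + M + 1) * (q ^ (m ^ 2 + (L + 1) * m) * PP q (m + (L + 1)))) M 0)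
      have := (Equiv.addRight (-1 : ℤ)).summable_iff.mpr this
      refine this.congr fun m => ?_
      simp [mul_assoc]

/-- bilateral Bailey transform -/
noncomputable def BB (q : ℂ) (A : ℤ → ℂ) (c : ℕ) (n : ℤ) : ℂ :=
  ∑' r : ℤ, A r * (PP q (n - r) * PP q (n + c + r))

lemma vand2 {q : ℂ} (h0 : q ≠ 0) (h1 : ‖q‖ < 1) (N r : ℤ) (c : ℕ) (hc : c ≤ 1) :
    ∑' n : ℕ, (q ^ (n ^ 2 + c * n) * PP q (N - n)) * (PP q (n - r) * PP q (n + c + r)) =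
      q ^ (r ^ 2 + c * r) * (PP q (N - r) * PP q (N + c + r)) := by
  have a1 : ∑' n : ℕ, (q ^ (n ^ 2 + c * n) * PP q (N - n)) * (PP q (n - r) * PP q (n + c + r)) =
     ∑' n : ℤ, (q ^ (n ^ 2 + c * n) * PP q (N - n)) * (PP q (n - r) * PP q (n + c + r)) := by
    rw [← (Nat.cast_injective (R := ℤ)).tsum_eq]
    · congr 1
    · intro n hn
      have h := right_ne_zero_of_mul hn
      have h2 := PP_supp (left_ne_zero_of_mul h)
      have h3 := PP_supp (right_ne_zero_of_mul h)
      exact ⟨n.toNat, by omega⟩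
  rw [a1, ← tsum_shift _ r]
  rcases lt_or_ge (N - r) 0 with h | h
  · rw [PP_neg q h]
    simp only [zero_mul, mul_zero]
    convert tsum_zero with m
    rcases lt_or_ge m 0 with h' | h'
    · rw [PP_neg q (show m + r - r < 0 by omega)]; ring
    · rw [PP_neg q (show N - (m + r) < 0 by omega)]; ring
  · obtain ⟨M, hM⟩ := Int.eq_ofNat_of_zero_le h
    obtain rfl : N = M + r := by omega
    have := vand h0 h1 M (2 * r + c)
    rw [show (M + r + c + r : ℤ) = M + (2 * r + c) by ring, show (M + r - r : ℤ) = M by ring, ← this,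
      ← tsum_mul_left]
    congr 1; ext m
    rw [show (M + r - (m + r) : ℤ) = M - m by ring, show (m + r - r : ℤ) = 0 + m by ring,
      show (m + r + c + r : ℤ) = m + (2 * r + c) by ring,
      show ((m + r) ^ 2 + c * (m + r) : ℤ) = (r ^ 2 + c * r) + (m ^ 2 + (2 * r + c) * m) by ring,
      zpow_add₀ h0]
    ring

lemma bailey_step {q : ℂ} (h0 : q ≠ 0) (h1 : ‖q‖ < 1) (A : ℤ → ℂ) (c : ℕ) (hc : c ≤ 1) (N : ℤ) :
    ∑' n : ℕ, (q ^ (n ^ 2 + c * n) * PP q (N - n)) * BB q A c n =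
      BB q (fun r => A r * q ^ (r ^ 2 + c * r)) c N := by
  unfold BB
  simp_rw [← tsum_mul_left]
  rw [Summable.tsum_comm]
  · congr 1; ext r
    have := vand2 h0 h1 N r c hc
    rw [mul_assoc, ← this, ← tsum_mul_left]
    congr 1; ext n; ring
  · apply summable_of_hasFiniteSupport
    refine ((Set.finite_Icc (-(N.toNat + 1 : ℤ)) N.toNat).prod (Set.finite_Iic N.toNat)).subset ?_
    rintro ⟨r, n⟩ hn
    simp only [Function.mem_support, Function.uncurry] at hn
    have g1 := PP_supp (right_ne_zero_of_mul (left_ne_zero_of_mul hn))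
    have h := right_ne_zero_of_mul (right_ne_zero_of_mul hn)
    have h2 := PP_supp (left_ne_zero_of_mul h)
    have h3 := PP_supp (right_ne_zero_of_mul h)
    simp only [Set.mem_prod, Set.mem_Iic, Set.mem_Icc]
    refine ⟨⟨by omega, by omega⟩, by omega⟩

lemma switch {q : ℂ} (h0 : q ≠ 0) (h1 : ‖q‖ < 1) (i : ℕ) (n : ℤ) :
    BB q (fun r => (-1) ^ r * q ^ ((i + 1) * r ^ 2 + i * r)) 1 n =
    BB q (fun r => (-1) ^ r * q ^ ((i + 1) * r ^ 2 + i * r)) 0 n := by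
  have key : ∑' r : ℤ, ((-1) ^ r * q ^ ((i + 1) * r ^ 2 + i * r) * q ^ (n + 1 + r)) *
      (PP q (n - r) * PP q (n + 1 + r)) = 0 := by
    set f : ℤ → ℂ := fun r => ((-1) ^ r * q ^ ((i + 1) * r ^ 2 + i * r) * q ^ (n + 1 + r)) *
      (PP q (n - r) * PP q (n + 1 + r)) with hf
    have hs : ∑' r, f (-1 - r) = ∑' r, f r := (Equiv.subLeft (-1 : ℤ)).tsum_eq f
    have hn : ∀ r, f (-1 - r) = - f r := by
      intro r
      simp only [hf]
      rw [show (n - (-1 - r)) = n + 1 + r by ring, show n + 1 + (-1 - r) = n - r by ring]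
      have s1 : ((-1 : ℂ)) ^ (-1 - r) = - (-1) ^ r := by
        rw [zpow_sub₀ (by norm_num), zpow_neg, zpow_one]
        rcases Int.even_or_odd r with h | h
        · simp [h.neg_one_zpow]
        · simp [h.neg_one_zpow]
      have s2 : q ^ ((i + 1) * (-1 - r) ^ 2 + i * (-1 - r)) * q ^ (n - r) =
          q ^ ((i + 1) * r ^ 2 + i * r) * q ^ (n + 1 + r) := by
        rw [← zpow_add₀ h0, ← zpow_add₀ h0]; congr 1; ring
      rw [s1]
      linear_combination (-(-1) ^ r * (PP q (n - r) * PP q (n + 1 + r))) * s2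
    simp_rw [hn, tsum_neg] at hs
    have : (2 : ℂ) * ∑' r, f r = 0 := by linear_combination -hs
    simpa using this
  unfold BB
  rw [← sub_zero (∑' r : ℤ, _), ← key, ← Summable.tsum_sub]
  · congr 1; ext r
    have := PP_rec h1 (n + 1 + r)
    rw [show n + 1 + r - 1 = n + (0 : ℕ) + r by push_cast; ring] at this
    rw [← this]; push_cast; ring
  · exact summ_fin q _ _ _
  · exact summ_fin q _ _ _

lemma gauss {q : ℂ} (h0 : q ≠ 0) (h1 : ‖q‖ < 1) (n : ℕ) :
    BB q (fun r => (-1) ^ r * q ^ (r ^ 2)) 0 n = (qPoch (q ^ 2) (q ^ 2) n)⁻¹ := by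
  induction n with
  | zero =>
    unfold BB
    rw [tsum_eq_single 0]
    · simp [PP_zero, qPoch]
    · intro m hm
      rcases lt_or_gt_of_ne hm with h | h
      · rw [PP_neg q (show ((0 : ℕ) : ℤ) + (0 : ℕ) + m < 0 by push_cast; omega)]; simp
      · rw [PP_neg q (show ((0 : ℕ) : ℤ) - m < 0 by push_cast; omega)]; simp
  | succ n ih =>
    have hne : 1 - q ^ (2 * (n + 1)) ≠ 0 := one_sub_pow_ne h1 _ (by omega)
    have e : qPoch (q ^ 2) (q ^ 2) (n + 1) = qPoch (q ^ 2) (q ^ 2) n * (1 - q ^ (2 * (n + 1))) := by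
      unfold qPoch; rw [Finset.prod_range_succ, ← pow_succ', ← pow_mul]
    rw [e, mul_inv, ← ih, eq_mul_inv_iff_mul_eq₀ hne]
    set G : ℤ → ℂ := fun r => ((-1) ^ r * q ^ (r ^ 2 + n + 1 - r)) *
      (PP q (n + 1 - r) * PP q (n + r)) with hG
    have hGs : Summable G := summ_fin q _ _ _
    have hGs' : Summable fun r => G (r + 1) := (Equiv.addRight (1 : ℤ)).summable_iff.mpr hGs
    have hz : ∑' r, (G r - G (r + 1)) = 0 := by
      rw [Summable.tsum_sub hGs hGs', tsum_shift G 1, sub_self]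
    unfold BB
    rw [← add_zero (∑' r : ℤ, _ * (PP q (n - r) * _)), ← hz, ← tsum_mul_right, ← Summable.tsum_add]
    · congr 1; ext r
      simp only [hG]
      have r1 := PP_rec h1 (n + 1 - r)
      have r2 := PP_rec h1 (n + 1 + r)
      rw [show (n + 1 - r - 1 : ℤ) = n - r by ring] at r1
      rw [show (n + 1 + r - 1 : ℤ) = n + r by ring] at r2
      rw [show (n + 1 - (r + 1) : ℤ) = n - r by ring, show (n + (r + 1) : ℤ) = n + 1 + r by ring]
      push_cast
      rw [add_zero, add_zero, ← r1, ← r2, zpow_add₀ (by norm_num : (-1 : ℂ) ≠ 0), zpow_one,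
        ← zpow_natCast]
      have z1 : q ^ ((2 * (n + 1) : ℕ) : ℤ) = q ^ (n + 1 - r : ℤ) * q ^ (n + 1 + r : ℤ) := by
        rw [← zpow_add₀ h0]; congr 1; push_cast; ring
      have z2 : q ^ (r ^ 2 + n + 1 - r : ℤ) = q ^ (r ^ 2) * q ^ (n + 1 - r : ℤ) := by
        rw [← zpow_add₀ h0]; congr 1; ring
      have z3 : q ^ ((r + 1) ^ 2 + n + 1 - (r + 1) : ℤ) = q ^ (r ^ 2) * q ^ (n + 1 + r : ℤ) := by
        rw [← zpow_add₀ h0]; congr 1; ring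
      rw [z1, z2, z3]
      ring
    · exact summ_fin q _ _ _
    · exact hGs.sub hGs'

set_option maxHeartbeats 1000000 in
lemma jtp_s1 {q z : ℂ} (hz : z ≠ 0) (h0 : q ≠ 0) (h1 : ‖q‖ < 1) (w : ℤ → ℂ)
    (hw : ∀ r, w (r + 1) = - z * q ^ r * w r) (n : ℕ) :
    (1 - q ^ (2 * n + 1 : ℤ)) * BB q w 1 n = (1 - z⁻¹ * q ^ (n + 1 : ℤ)) * BB q w 0 n := by
  rw [sub_mul 1 (z⁻¹ * _), one_mul]
  unfold BB
  set g : ℤ → ℂ := fun r => (z⁻¹ * q ^ (n + 1 : ℤ)) * (w r * (PP q (n - r) * PP q (n + (0 : ℕ) + r)))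
    with hg
  have hgs : Summable g := (summ_fin q w n (n + (0 : ℕ))).mul_left _
  have hgs' : Summable fun r => g (r + 1) := (Equiv.addRight (1 : ℤ)).summable_iff.mpr hgs
  rw [← tsum_mul_left, ← tsum_mul_left]
  rw [← tsum_shift g 1, ← Summable.tsum_sub (summ_fin q w n (n + (0 : ℕ))) hgs']
  congr 1; ext r
  simp only [hg]
  have r1 := PP_rec h1 (n - r)
  have r2 := PP_rec h1 (n + 1 + r)
  rw [show (n + 1 + r - 1 : ℤ) = n + r by ring] at r2
  rw [show (n - (r + 1) : ℤ) = n - r - 1 by ring, ← r1]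
  push_cast
  rw [add_zero, ← r2, show (n + (r + 1) : ℤ) = n + 1 + r by ring, hw]
  have z1 : q ^ (2 * n + 1 : ℤ) = q ^ (n + 1 + r : ℤ) * q ^ (n - r : ℤ) := by
    rw [← zpow_add₀ h0]; congr 1; ring
  have z2 : q ^ (n + 1 + r : ℤ) = q ^ (n + 1 : ℤ) * q ^ r := by
    rw [← zpow_add₀ h0]
  rw [z1, z2]
  field_simp
  ring

set_option maxHeartbeats 1000000 in
lemma jtp_s2 {q z : ℂ} (h0 : q ≠ 0) (h1 : ‖q‖ < 1) (w : ℤ → ℂ)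
    (hw : ∀ r, w (r + 1) = - z * q ^ r * w r) (n : ℕ) :
    (1 - q ^ (2 * n + 2 : ℤ)) * BB q w 0 (n + 1) = (1 - z * q ^ (n : ℤ)) * BB q w 1 n := by
  rw [sub_mul 1 (z * _), one_mul]
  unfold BB
  set g : ℤ → ℂ := fun r => (z * q ^ (n : ℤ)) * (w r * (PP q (n - r) * PP q (n + (1 : ℕ) + r)))
    with hg
  have hgs : Summable g := (summ_fin q w n (n + (1 : ℕ))).mul_left _
  have hgs' : Summable fun r => g (r + -1) := (Equiv.addRight (-1 : ℤ)).summable_iff.mpr hgs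
  rw [← tsum_mul_left, ← tsum_mul_left]
  rw [← tsum_shift g (-1), ← Summable.tsum_sub (summ_fin q w n (n + (1 : ℕ))) hgs']
  congr 1; ext r
  simp only [hg]
  have r1 := PP_rec h1 (n + 1 - r)
  have r2 := PP_rec h1 (n + 1 + r)
  rw [show (n + 1 + r - 1 : ℤ) = n + r by ring] at r2
  rw [show (n + 1 - r - 1 : ℤ) = n - r by ring] at r1
  rw [show (n - (r + -1) : ℤ) = n + 1 - r by ring, ← r1]
  push_cast
  rw [add_zero, show (n + 1 + (r + -1) : ℤ) = n + r by ring, ← r2]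
  have h := hw (r + -1)
  rw [show r + -1 + 1 = r by ring] at h
  have z1 : q ^ (2 * n + 2 : ℤ) = q ^ (n + 1 + r : ℤ) * q ^ (n + 1 - r : ℤ) := by
    rw [← zpow_add₀ h0]; congr 1; ring
  have z2 : q ^ (n : ℤ) = q ^ (n + 1 - r : ℤ) * q ^ (r + -1) := by
    rw [← zpow_add₀ h0]; congr 1; ring
  rw [z1, z2, h]
  ring

/-- finite Jacobi triple product -/
lemma jtp_fin {q z : ℂ} (hz : z ≠ 0) (h0 : q ≠ 0) (h1 : ‖q‖ < 1) (w : ℤ → ℂ) (w0 : w 0 = 1)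
    (hw : ∀ r, w (r + 1) = - z * q ^ r * w r) (n : ℕ) :
    BB q w 0 n = PP q (2 * n) * (qPoch z q n * qPoch (q / z) q n) := by
  induction n with
  | zero =>
    unfold BB
    rw [tsum_eq_single 0]
    · simp [PP_zero, qPoch, w0]
    · intro m hm
      rcases lt_or_gt_of_ne hm with h | h
      · rw [PP_neg q (show ((0 : ℕ) : ℤ) + (0 : ℕ) + m < 0 by push_cast; omega)]; simp
      · rw [PP_neg q (show ((0 : ℕ) : ℤ) - m < 0 by push_cast; omega)]; simp
  | succ n ih =>
    have s1 := jtp_s1 hz h0 h1 w hw n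
    have s2 := jtp_s2 h0 h1 w hw n
    have n1 := one_sub_zpow_ne h1 (2 * n + 1) (by omega)
    have n2 := one_sub_zpow_ne h1 (2 * n + 2) (by omega)
    have p1 := PP_rec h1 (2 * n + 1)
    have p2 := PP_rec h1 (2 * n + 2)
    rw [show (2 * n + 1 - 1 : ℤ) = 2 * n by ring] at p1
    rw [show (2 * n + 2 - 1 : ℤ) = 2 * n + 1 by ring] at p2
    rw [ih, ← p1, ← p2] at s1
    push_cast
    rw [show (2 * (n + 1) : ℤ) = 2 * n + 2 by ring]
    have e1 : qPoch z q (n + 1) = qPoch z q n * (1 - z * q ^ (n : ℤ)) := by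
      unfold qPoch; rw [Finset.prod_range_succ, zpow_natCast]
    have e2 : qPoch (q / z) q (n + 1) = qPoch (q / z) q n * (1 - z⁻¹ * q ^ (n + 1 : ℤ)) := by
      unfold qPoch; rw [Finset.prod_range_succ, zpow_add₀ h0, zpow_natCast, zpow_one]; ring
    rw [e1, e2]
    apply mul_left_cancel₀ n2
    apply mul_left_cancel₀ n1
    rw [s2]
    linear_combination (1 - z * q ^ (n : ℤ)) * s1

lemma summ_geo {x q : ℂ} (h1 : ‖q‖ < 1) : Summable fun j : ℕ => ‖-(x * q ^ j)‖ := by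
  simp only [norm_neg, norm_mul, norm_pow]
  exact (summable_geometric_of_lt_one (norm_nonneg q) h1).mul_left _

lemma qPoch_tendsto (x : ℂ) {q : ℂ} (h1 : ‖q‖ < 1) :
    Tendsto (fun n => qPoch x q n) atTop (𝓝 (qPochInf x q)) := by
  have h := multipliable_one_add_of_summable (summ_geo (x := x) h1)
  have := h.hasProd.tendsto_prod_nat
  simpa [qPoch, qPochInf, sub_eq_add_neg] using this

lemma qPochInf_ne {q : ℂ} (h1 : ‖q‖ < 1) : qPochInf q q ≠ 0 := by
  have := tprod_one_add_ne_zero_of_summable (f := fun j : ℕ => -(q * q ^ j)) (fun j => by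
    rw [← sub_eq_add_neg, ← pow_succ']
    exact one_sub_pow_ne h1 _ (by omega)) (summ_geo h1)
  simpa [qPochInf, sub_eq_add_neg] using this

lemma PP_tendsto {q : ℂ} (h1 : ‖q‖ < 1) :
    Tendsto (fun n : ℤ => PP q n) atTop (𝓝 (qPochInf q q)⁻¹) := by
  have h := (qPoch_tendsto q h1).inv₀ (qPochInf_ne h1)
  have h2 : Tendsto (fun n : ℤ => n.toNat) atTop atTop := by
    refine tendsto_atTop.mpr fun b => ?_
    filter_upwards [eventually_ge_atTop (b : ℤ)] with n hn
    omega
  refine (h.comp h2).congr' ?_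
  filter_upwards [eventually_ge_atTop (0 : ℤ)] with n hn
  simp [PP, not_lt.mpr hn]

lemma PP_bdd {q : ℂ} (h1 : ‖q‖ < 1) : ∃ C : ℝ, 0 ≤ C ∧ ∀ n : ℤ, ‖PP q n‖ ≤ C := by
  have h := ((qPoch_tendsto q h1).inv₀ (qPochInf_ne h1)).norm.bddAbove_range
  obtain ⟨C, hC⟩ := h
  have hC' : ∀ n : ℕ, ‖(qPoch q q n)⁻¹‖ ≤ C := fun n => hC ⟨n, rfl⟩
  refine ⟨C, (norm_nonneg _).trans (hC' 0), fun n => ?_⟩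
  unfold PP
  split_ifs
  · simpa using (norm_nonneg _).trans (hC' 0)
  · exact hC' _

lemma BB_tendsto {q : ℂ} (h1 : ‖q‖ < 1) (w : ℤ → ℂ) (hw : Summable fun r => ‖w r‖) :
    Tendsto (fun n : ℕ => BB q w 0 n) atTop
      (𝓝 ((∑' r, w r) * ((qPochInf q q)⁻¹ * (qPochInf q q)⁻¹))) := by
  obtain ⟨C, hC0, hC⟩ := PP_bdd h1
  unfold BB
  rw [← tsum_mul_right]
  refine tendsto_tsum_of_dominated_convergence (bound := fun r => ‖w r‖ * (C * C))
    (hw.mul_right _) ?_ ?_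
  · intro r
    refine tendsto_const_nhds.mul (((PP_tendsto h1).comp ?_).mul ((PP_tendsto h1).comp ?_))
    · exact tendsto_atTop_add_const_right _ _ tendsto_natCast_atTop_atTop
    · simp only [Nat.cast_zero, add_zero]
      exact tendsto_atTop_add_const_right _ _ tendsto_natCast_atTop_atTop
  · refine Eventually.of_forall fun n r => ?_
    rw [norm_mul, norm_mul]
    have := hC (n - r); have := hC (n + (0 : ℕ) + r)
    gcongr

lemma jtp {q z : ℂ} (hz : z ≠ 0) (h0 : q ≠ 0) (h1 : ‖q‖ < 1) (w : ℤ → ℂ) (w0 : w 0 = 1)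
    (hw : ∀ r, w (r + 1) = - z * q ^ r * w r) (hs : Summable fun r => ‖w r‖) :
    ∑' r, w r = qPochInf q q * qPochInf (q / z) q * qPochInf z q := by
  have a := BB_tendsto h1 w hs
  simp_rw [jtp_fin hz h0 h1 w w0 hw] at a
  have b : Tendsto (fun n : ℕ => PP q (2 * n) * (qPoch z q n * qPoch (q / z) q n)) atTop
      (𝓝 ((qPochInf q q)⁻¹ * (qPochInf z q * qPochInf (q / z) q))) := by
    refine Tendsto.mul ((PP_tendsto h1).comp ?_) ((qPoch_tendsto z h1).mul (qPoch_tendsto (q / z) h1))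
    exact tendsto_natCast_atTop_atTop.const_mul_atTop' (by norm_num)
  have := tendsto_nhds_unique a b
  have hne := qPochInf_ne h1
  field_simp at this
  rw [this]; ring

/-- weight of a tuple -/
noncomputable def UT (q : ℂ) (i : ℕ) : ℕ → ℕ → (ℕ → ℕ) → ℂ
  | 0, N, _ => (qPoch (q ^ 2) (q ^ 2) N)⁻¹
  | j + 1, N, t => q ^ (t 0 ^ 2 + (if j < i then 1 else 0) * t 0) * PP q ((N : ℤ) - (t 0 : ℤ)) *
      UT q i j (t 0) (fun m => t (m + 1))

/-- extension of a finite tuple by zero -/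
def ext0 (j : ℕ) (s : Fin j → ℕ) : ℕ → ℕ := fun m => if h : m < j then s ⟨m, h⟩ else 0

lemma ext0_cons_zero (j n : ℕ) (s : Fin j → ℕ) : ext0 (j + 1) (Fin.cons n s) 0 = n := by
  simp [ext0]

lemma ext0_cons_succ (j n : ℕ) (s : Fin j → ℕ) :
    (fun m => ext0 (j + 1) (Fin.cons n s) (m + 1)) = ext0 j s := by
  ext m
  by_cases h : m < j
  · simp only [ext0, h, dif_pos, Nat.add_lt_add_iff_right]
    exact Fin.cons_succ (α := fun _ => ℕ) n s ⟨m, h⟩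
  · simp [ext0, h]

lemma summ_pi {ρ : ℝ} (h0 : 0 ≤ ρ) (h1 : ρ < 1) (j : ℕ) :
    Summable fun s : Fin j → ℕ => ∏ m, ρ ^ s m := by
  induction j with
  | zero => exact Summable.of_finite
  | succ j ih =>
    rw [← (Fin.consEquiv (fun _ : Fin (j + 1) => ℕ)).summable_iff]
    have := (summable_geometric_of_lt_one h0 h1).mul_of_nonneg ih
      (fun n => pow_nonneg h0 n) (fun s => Finset.prod_nonneg fun m _ => pow_nonneg h0 _)
    refine this.congr fun p => ?_
    simp [Fin.consEquiv, Fin.prod_univ_succ]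

lemma UT_bound {q : ℂ} (h1 : ‖q‖ < 1) (i : ℕ) : ∃ C : ℝ, 0 ≤ C ∧ ∀ j N (s : Fin j → ℕ),
    ‖UT q i j N (ext0 j s)‖ ≤ C ^ (j + 1) * ∏ m, ‖q‖ ^ s m := by
  obtain ⟨C1, hC10, hC1⟩ := PP_bdd h1
  obtain ⟨C2, hC20, hC2⟩ := PP_bdd (q := q ^ 2)
    (by rw [norm_pow]; exact pow_lt_one₀ (norm_nonneg _) h1 (by norm_num))
  refine ⟨max C1 C2, le_max_of_le_left hC10, fun j => ?_⟩
  have hC0 : 0 ≤ max C1 C2 := le_max_of_le_left hC10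
  induction j with
  | zero =>
    intro N s
    have := hC2 N
    rw [PP_nat] at this
    simpa [UT] using Or.inr this
  | succ j ih =>
    intro N s
    obtain ⟨⟨n, t⟩, rfl⟩ := (Fin.consEquiv (fun _ : Fin (j + 1) => ℕ)).surjective s
    simp only [Fin.consEquiv, Equiv.coe_fn_mk]
    rw [UT, ext0_cons_succ, ext0_cons_zero, norm_mul, norm_mul, Fin.prod_univ_succ, norm_pow]
    simp only [Fin.cons_zero, Fin.cons_succ]
    have a1 : ‖q‖ ^ (n ^ 2 + (if j < i then 1 else 0) * n) ≤ ‖q‖ ^ n :=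
      pow_le_pow_of_le_one (norm_nonneg _) h1.le ((Nat.le_self_pow two_ne_zero n).trans (Nat.le_add_right _ _))
    have a2 := (hC1 ((N : ℤ) - n)).trans (le_max_left C1 C2)
    have a3 := ih n t
    calc _ ≤ ‖q‖ ^ n * max C1 C2 * (max C1 C2 ^ (j + 1) * ∏ m, ‖q‖ ^ t m) := by gcongr
      _ = _ := by ring

lemma UT_summ {q : ℂ} (h1 : ‖q‖ < 1) (i j N : ℕ) :
    Summable fun s : Fin j → ℕ => UT q i j N (ext0 j s) := by
  obtain ⟨C, hC0, hC⟩ := UT_bound h1 i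
  exact Summable.of_norm_bounded ((summ_pi (norm_nonneg q) h1 j).mul_left _) (hC j N)

/-- the weights in the Bailey chain -/
noncomputable def ww (q : ℂ) (i j : ℕ) (r : ℤ) : ℂ :=
  (-1) ^ r * q ^ ((j + 1 : ℤ) * r ^ 2 + (min i j : ℕ) * r)

lemma FF_step {q : ℂ} (h0 : q ≠ 0) (h1 : ‖q‖ < 1) (i j : ℕ) (N : ℤ) :
    ∑' n : ℕ, (q ^ (n ^ 2 + (if j < i then 1 else 0) * n) * PP q (N - n)) * BB q (ww q i j) 0 n =
      BB q (ww q i (j + 1)) 0 N := by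
  by_cases h : j < i
  · have e1 : ww q i j = fun r : ℤ => (-1) ^ r * q ^ ((j + 1) * r ^ 2 + j * r) := by
      ext r; rw [ww, min_eq_right h.le]
    have e2 : ww q i (j + 1) = fun r : ℤ => (-1) ^ r * q ^ (((j + 1 : ℕ) + 1) * r ^ 2 + (j + 1 : ℕ) * r) := by
      ext r; rw [ww, min_eq_right h]
    rw [e1, e2]
    simp_rw [← switch h0 h1]
    have := bailey_step h0 h1 (fun r => (-1) ^ r * q ^ ((j + 1) * r ^ 2 + j * r)) 1 le_rfl N
    rw [if_pos h, this]
    congr 1; ext r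
    rw [mul_assoc, ← zpow_add₀ h0]; congr 2; push_cast; ring
  · have := bailey_step h0 h1 (ww q i j) 0 (by norm_num) N
    rw [if_neg h, this]
    congr 1; ext r
    rw [ww, ww, mul_assoc, ← zpow_add₀ h0, min_eq_left (by omega), min_eq_left (by omega)]
    congr 2; push_cast; ring

lemma UT_tsum {q : ℂ} (h0 : q ≠ 0) (h1 : ‖q‖ < 1) (i j : ℕ) : ∀ N : ℕ,
    ∑' s : Fin j → ℕ, UT q i j N (ext0 j s) = BB q (ww q i j) 0 N := by
  induction j with
  | zero =>
    intro N
    rw [tsum_eq_single default (fun b hb => absurd (Subsingleton.elim _ _) hb), UT, ← gauss h0 h1]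
    congr 1; ext r
    simp [ww]
  | succ j ih =>
    intro N
    have hs := UT_summ h1 i (j + 1) N
    rw [← FF_step h0 h1, ← (Fin.consEquiv (fun _ : Fin (j + 1) => ℕ)).tsum_eq]
    rw [← (Fin.consEquiv (fun _ : Fin (j + 1) => ℕ)).summable_iff] at hs
    refine (Summable.tsum_prod hs).trans ?_
    congr 1; ext n
    rw [← ih n, ← tsum_mul_left]
    congr 1; ext t
    simp only [Function.comp_apply, Fin.consEquiv, Equiv.coe_fn_mk]
    rw [UT, ext0_cons_succ, ext0_cons_zero]

lemma UT_zero (q : ℂ) (i j : ℕ) : ∀ N t, (∃ m, m + 1 < j ∧ t m < t (m + 1)) → UT q i j N t = 0 := by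
  induction j with
  | zero => rintro N t ⟨m, hm, -⟩; omega
  | succ j ih =>
    rintro N t ⟨m, hm, hlt⟩
    rw [UT]
    rcases m with _ | m
    · obtain ⟨j, rfl⟩ : ∃ j', j = j' + 1 := ⟨j - 1, by omega⟩
      rw [UT]
      simp only [zero_add] at hlt ⊢
      rw [PP_neg q (show (t 0 : ℤ) - (t 1 : ℤ) < 0 by omega)]; ring
    · rw [ih _ _ ⟨m, by omega, hlt⟩, mul_zero]

lemma UT_formula (q : ℂ) (i j : ℕ) : ∀ N t, (∀ m, m < j → t (m + 1) ≤ t m) →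
    UT q i (j + 1) N t = PP q ((N : ℤ) - (t 0 : ℤ)) *
      (q ^ (∑ m ∈ Finset.range (j + 1), (t m ^ 2 + if j + 1 ≤ m + i then t m else 0)) /
       ((∏ m ∈ Finset.range j, qPoch q q (t m - t (m + 1))) * qPoch (q ^ 2) (q ^ 2) (t j))) := by
  induction j with
  | zero =>
    intro N t _
    rw [UT, UT]
    have : (if 0 < i then 1 else 0) * t 0 = if 0 + 1 ≤ 0 + i then t 0 else 0 := by
      split_ifs <;> first | omega | simp
    simp only [zero_add, Finset.range_one, Finset.sum_singleton, Finset.range_zero,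
      Finset.prod_empty] at this ⊢
    rw [this]
    ring
  | succ j ih =>
    intro N t ht
    rw [UT, ih _ _ (fun m hm => ht (m + 1) (by omega)), Finset.sum_range_succ' _ (j + 1),
      Finset.prod_range_succ' _ j]
    have : (if j + 1 < i then 1 else 0) * t 0 = if j + 1 + 1 ≤ 0 + i then t 0 else 0 := by
      split_ifs <;> first | omega | simp
    rw [this]
    have e : ∀ m, (j + 1 + 1 ≤ m + 1 + i) = (j + 1 ≤ m + i) := fun m => by
      apply propext; omega
    simp only [e, zero_add]
    have h0 := ht 0 (by omega)
    rw [zero_add] at h0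
    rw [show (t 0 : ℤ) - (t 1 : ℤ) = ((t 0 - t 1 : ℕ) : ℤ) by omega, PP_nat, pow_add q (∑ m ∈ _, _)]
    rw [div_eq_mul_inv, div_eq_mul_inv, mul_inv, mul_inv, mul_inv]
    ring

lemma ww_summ {q : ℂ} (h1 : ‖q‖ < 1) (i j : ℕ) (hij : i ≤ j) (h0 : q ≠ 0) :
    Summable fun r => ‖ww q i j r‖ := by
  have hs : Summable fun r : ℤ => ‖q‖ ^ r.natAbs := by
    have g := summable_geometric_of_lt_one (norm_nonneg q) h1
    refine Summable.of_nat_of_neg ?_ ?_ <;> simpa using g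
  refine hs.of_nonneg_of_le (fun r => norm_nonneg _) fun r => ?_
  have : ‖((-1 : ℂ)) ^ r‖ = 1 := by rw [norm_zpow]; simp
  rw [ww, norm_mul, this, one_mul, norm_zpow, min_eq_left hij, ← zpow_natCast ‖q‖]
  refine zpow_le_zpow_right_of_le_one₀ (norm_pos_iff.mpr h0) h1.le ?_
  have hij' : (i : ℤ) ≤ j := by exact_mod_cast hij
  have hi0 : (0 : ℤ) ≤ i := by positivity
  rw [← Int.natAbs_sq]
  rcases Int.natAbs_eq r with h | h
  · set a : ℕ := r.natAbs
    have ha : (0 : ℤ) ≤ a := by positivity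
    have ha2 : (a : ℤ) ≤ (a : ℤ) ^ 2 := by exact_mod_cast Nat.le_self_pow two_ne_zero a
    rw [h]; nlinarith [mul_nonneg hi0 ha, mul_nonneg (hi0.trans hij') (sq_nonneg (a : ℤ))]
  · set a : ℕ := r.natAbs
    have ha : (0 : ℤ) ≤ a := by positivity
    have ha2 : (a : ℤ) ≤ (a : ℤ) ^ 2 := by exact_mod_cast Nat.le_self_pow two_ne_zero a
    rw [h]
    nlinarith [mul_le_mul_of_nonneg_right hij' ha, mul_le_mul_of_nonneg_left ha2 (hi0.trans hij')]

lemma UT_lim {q : ℂ} (h0 : q ≠ 0) (h1 : ‖q‖ < 1) (i j : ℕ) (hij : i ≤ j + 1) :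
    ∑' s : Fin (j + 1) → ℕ, UT q i (j + 1) (ext0 (j + 1) s 0) (ext0 (j + 1) s) =
      (∑' r, ww q i (j + 1) r) / qPochInf q q := by
  have a := BB_tendsto h1 _ (ww_summ h1 i (j + 1) hij h0)
  simp_rw [← UT_tsum h0 h1 i (j + 1)] at a
  have hne := qPochInf_ne h1
  have b : Tendsto (fun N : ℕ => ∑' s : Fin (j + 1) → ℕ, UT q i (j + 1) N (ext0 (j + 1) s)) atTop
      (𝓝 (∑' s : Fin (j + 1) → ℕ, (qPochInf q q)⁻¹ *
        UT q i (j + 1) (ext0 (j + 1) s 0) (ext0 (j + 1) s))) := by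
    obtain ⟨C, hC0, hC⟩ := UT_bound h1 i
    refine tendsto_tsum_of_dominated_convergence
      ((summ_pi (norm_nonneg q) h1 (j + 1)).mul_left (C ^ (j + 1 + 1))) ?_
      (Eventually.of_forall fun N s => hC (j + 1) N s)
    intro s
    have e : ∀ N : ℕ, UT q i (j + 1) N (ext0 (j + 1) s) =
        PP q ((N : ℤ) - (ext0 (j + 1) s 0 : ℤ)) *
          UT q i (j + 1) (ext0 (j + 1) s 0) (ext0 (j + 1) s) := by
      intro N
      rw [UT, UT, sub_self, PP_zero]; ring
    rw [funext e]
    refine Tendsto.mul ((PP_tendsto h1).comp ?_) tendsto_const_nhds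
    exact tendsto_atTop_add_const_right _ _ tendsto_natCast_atTop_atTop
  rw [tsum_mul_left] at b
  have := tendsto_nhds_unique a b
  field_simp at this
  rw [eq_div_iff hne, this]; ring
 

theorem bressoud_even_modulus (q : ℂ) (h0 : 0 < ‖q‖) (h1 : ‖q‖ < 1)
    (k i : ℕ) (hk : 2 ≤ k) (hi : i ≤ k - 1) :
    (∑' s : {s : Fin (k - 1) → ℕ // Antitone s},
      (let t : ℕ → ℕ := fun m => if h : m < k - 1 then s.1 ⟨m, h⟩ else 0
       q ^ (∑ m ∈ Finset.range (k - 1), (t m) ^ 2 + ∑ m ∈ Finset.Ico (k - 1 - i) (k - 1), t m) /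
         ((∏ m ∈ Finset.range (k - 2), qPoch q q (t m - t (m + 1))) *
           qPoch (q ^ 2) (q ^ 2) (t (k - 2))))) =
      qPochInf (q ^ (2 * k)) (q ^ (2 * k)) * qPochInf (q ^ (k - i)) (q ^ (2 * k)) *
        qPochInf (q ^ (k + i)) (q ^ (2 * k)) / qPochInf q q := by
  have hq : q ≠ 0 := norm_pos_iff.mp h0
  obtain ⟨j, rfl⟩ : ∃ j, k = j + 2 := ⟨k - 2, by omega⟩
  rw [show j + 2 - 1 = j + 1 by omega] at *
  rw [show j + 2 - 2 = j by omega]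
  have hz : q ^ (j + 2 + i) ≠ 0 := pow_ne_zero _ hq
  have hQ1 : ‖q ^ (2 * (j + 2))‖ < 1 := by
    rw [norm_pow]; exact pow_lt_one₀ (norm_nonneg _) h1 (by omega)
  have hJ := jtp (q := q ^ (2 * (j + 2))) (z := q ^ (j + 2 + i)) hz (pow_ne_zero _ hq) hQ1
    (ww q i (j + 1)) (by simp [ww]) (by
      intro r
      rw [ww, ww, min_eq_left hi, zpow_add₀ (by norm_num), zpow_one, ← zpow_natCast, ← zpow_natCast,
        ← zpow_mul]
      have : q ^ (((j + 1 : ℕ) + 1 : ℤ) * (r + 1) ^ 2 + (i : ℤ) * (r + 1)) =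
        q ^ ((j + 2 + i : ℕ) : ℤ) * q ^ (((2 * (j + 2) : ℕ) : ℤ) * r) *
          q ^ (((j + 1 : ℕ) + 1 : ℤ) * r ^ 2 + (i : ℤ) * r) := by
        rw [← zpow_add₀ hq, ← zpow_add₀ hq]; congr 1; push_cast; ring
      rw [this]; ring) (ww_summ h1 i (j + 1) hi hq)
  have hdiv : q ^ (2 * (j + 2)) / q ^ (j + 2 + i) = q ^ (j + 2 - i) := by
    rw [div_eq_iff hz, ← pow_add]; congr 1; omega
  rw [hdiv] at hJ
  rw [← hJ, ← UT_lim hq h1 i j hi, ← tsum_subtype_eq_of_support_subset (s := {s | Antitone s})]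
  · refine tsum_congr fun s => ?_
    have hs : Antitone s.1 := s.2
    have hanti : ∀ m, m < j → ext0 (j + 1) s.1 (m + 1) ≤ ext0 (j + 1) s.1 m := by
      intro m hm
      simp only [ext0, show m + 1 < j + 1 by omega, show m < j + 1 by omega, dif_pos]
      exact hs (by simp [Fin.le_def])
    rw [UT_formula q i j _ _ hanti, sub_self, PP_zero, one_mul, Finset.sum_add_distrib]
    have e : ∑ m ∈ Finset.range (j + 1), (if j + 1 ≤ m + i then ext0 (j + 1) s.1 m else 0) =
        ∑ m ∈ Finset.Ico (j + 1 - i) (j + 1), ext0 (j + 1) s.1 m := by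
      rw [← Finset.sum_filter]
      refine Finset.sum_congr ?_ fun _ _ => rfl
      ext m; simp only [Finset.mem_filter, Finset.mem_range, Finset.mem_Ico]; omega
    rw [e]
    rfl
  · intro s hs
    by_contra hna
    apply hs
    apply UT_zero
    simp only [Set.mem_ofPred_eq, Fin.antitone_iff_succ_le, not_forall, not_le] at hna
    obtain ⟨m, hm⟩ := hna
    refine ⟨m, by omega, ?_⟩
    have h1 : (m : ℕ) + 1 < j + 1 := by omega
    have h2 : (m : ℕ) < j + 1 := by omega
    simp only [ext0, h1, h2, dif_pos]
    exact hm
end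

section
/- (Combined Bressoud–Göllnitz–Gordon identity, stated with q replaced by q^2 to avoid half-integer powers.) Let q be a complex number with 0 < |q| < 1, and let k ≥ 1 and 1 ≤ i ≤ k be integers. Then ∑_{s_0 ≥ s_1 ≥ ⋯ ≥ s_{k-1} ≥ 0} (-q;q^2)_{s_0} · q^{s_0^2 + 2(s_1^2 + ⋯ + s_{k-1}^2) + 2(s_i + ⋯ + s_{k-1})} / [(q^2;q^2)_{s_0-s_1} ⋯ (q^2;q^2)_{s_{k-2}-s_{k-1}} (q^4;q^4)_{s_{k-1}}] = ((-q;q^2)_∞ / (q^2;q^2)_∞) · (q^{4k+2}, q^{2i+1}, q^{4k-2i+1}; q^{4k+2})_∞, where the linear term s_i + ⋯ + s_{k-1} is empty (equal to 0) when i = k. -/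
/-- Reciprocal of `(Q;Q)_m`, extended by zero to negative integers. -/
noncomputable def rq (Q : ℂ) (m : ℤ) : ℂ := if 0 ≤ m then (qPoch Q Q m.toNat)⁻¹ else 0

lemma rq_neg (Q : ℂ) {m : ℤ} (h : m < 0) : rq Q m = 0 := by
  simp [rq, not_le.mpr h]

lemma rq_nat (Q : ℂ) (m : ℕ) : rq Q (m : ℤ) = (qPoch Q Q m)⁻¹ := by
  simp [rq]

lemma qPoch_zero (x Q : ℂ) : qPoch x Q 0 = 1 := by simp [qPoch]

lemma qPoch_succ (x Q : ℂ) (n : ℕ) : qPoch x Q (n + 1) = qPoch x Q n * (1 - x * Q ^ n) := by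
  simp [qPoch, Finset.prod_range_succ]

lemma qPoch_succ' (x Q : ℂ) (n : ℕ) : qPoch x Q (n + 1) = (1 - x) * qPoch (x * Q) Q n := by
  simp only [qPoch, Finset.prod_range_succ']
  rw [mul_comm]
  simp [pow_succ, mul_assoc, mul_comm]

lemma qPoch_add (x Q : ℂ) (n m : ℕ) :
    qPoch x Q (n + m) = qPoch x Q n * qPoch (x * Q ^ n) Q m := by
  simp [qPoch, Finset.prod_range_add, pow_add, mul_assoc]

lemma one_sub_ne {Q x : ℂ} (hQ : ‖Q‖ < 1) (hx : ‖x‖ < 1) (n : ℕ) : 1 - x * Q ^ n ≠ 0 := by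
  intro h
  have h2 : x * Q ^ n = 1 := by linear_combination -h
  have h3 : ‖x * Q ^ n‖ = 1 := by rw [h2]; simp
  rw [norm_mul, norm_pow] at h3
  have h4 : ‖Q‖ ^ n ≤ 1 := pow_le_one₀ (norm_nonneg _) hQ.le
  nlinarith [norm_nonneg x, norm_nonneg Q, pow_nonneg (norm_nonneg Q) n]

lemma qPoch_ne_s10 {Q x : ℂ} (hQ : ‖Q‖ < 1) (hx : ‖x‖ < 1) (n : ℕ) : qPoch x Q n ≠ 0 := by
  rw [qPoch, Finset.prod_ne_zero_iff]
  intro j _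
  exact one_sub_ne hQ hx j

lemma rq_step {Q : ℂ} (hQ : ‖Q‖ < 1) (m : ℤ) : rq Q (m - 1) = (1 - Q ^ m) * rq Q m := by
  rcases lt_trichotomy m 0 with h | h | h
  · rw [rq_neg Q h, rq_neg Q (by omega)]; simp
  · subst h; rw [rq_neg Q (by omega)]; simp
  · obtain ⟨k, rfl⟩ : ∃ k : ℕ, m = (k : ℤ) + 1 := ⟨(m - 1).toNat, by omega⟩
    have e : ((k : ℤ) + 1) = ((k + 1 : ℕ) : ℤ) := by push_cast; ring
    rw [add_sub_cancel_right, e, rq_nat, rq_nat, qPoch_succ, zpow_natCast]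
    have h1 := qPoch_ne_s10 hQ hQ k
    have h2 := one_sub_ne hQ hQ k
    have : 1 - Q ^ (k + 1) = 1 - Q * Q ^ k := by ring
    rw [this]
    field_simp

/-- The basic bilateral sum. -/
noncomputable def SS (Q : ℂ) (e : ℕ) (a : ℤ → ℂ) (n : ℕ) : ℂ :=
  ∑' r : ℤ, a r * (rq Q (n - r) * rq Q (n + e + r))

lemma SS_summable (Q : ℂ) (e : ℕ) (a : ℤ → ℂ) (n : ℕ) :
    Summable (fun r : ℤ => a r * (rq Q (n - r) * rq Q (n + e + r))) := by
  apply summable_of_ne_finset_zero (s := Finset.Icc (-(n + e : ℤ)) n)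
  intro r hr
  rw [Finset.mem_Icc, not_and_or, not_le, not_le] at hr
  rcases hr with h | h
  · rw [rq_neg Q (show (n + e + r : ℤ) < 0 by omega)]; simp
  · rw [rq_neg Q (show (n - r : ℤ) < 0 by omega)]; simp

lemma SS_zero {Q : ℂ} (hQ0 : Q ≠ 0) (a : ℤ → ℂ) (n : ℕ)
    (ha : ∀ r, a (-1 - r) = - Q ^ (2 * r + 1) * a r) :
    SS Q 1 (fun r => a r * Q ^ (n + r + 1)) n = 0 := by
  set T := SS Q 1 (fun r => a r * Q ^ (n + r + 1)) n with hT
  have : T = -T := by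
    conv_lhs => rw [hT, SS, ← (Equiv.subLeft (-1 : ℤ)).tsum_eq]
    rw [hT, SS, ← tsum_neg]
    congr 1
    funext r
    simp only [Equiv.subLeft_apply]
    rw [ha]
    have e1 : Q ^ (2 * r + 1) * Q ^ ((n : ℤ) + (-1 - r) + 1) = Q ^ ((n : ℤ) + r + 1) := by
      rw [← zpow_add₀ hQ0]; congr 1; ring
    rw [← e1]
    have e2 : (n : ℤ) - (-1 - r) = n + (1 : ℕ) + r := by push_cast; ring
    have e3 : (n : ℤ) + (1 : ℕ) + (-1 - r) = n - r := by push_cast; ring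
    rw [e2, e3]
    ring
  have h2 : (2 : ℂ) * T = 0 := by linear_combination this
  simpa using h2

lemma SS_Y_eq_X {Q : ℂ} (hQ0 : Q ≠ 0) (hQ : ‖Q‖ < 1) (a : ℤ → ℂ) (n : ℕ)
    (ha : ∀ r, a (-1 - r) = - Q ^ (2 * r + 1) * a r) : SS Q 0 a n = SS Q 1 a n := by
  have h := SS_zero hQ0 a n ha
  have : SS Q 0 a n = SS Q 1 a n - SS Q 1 (fun r => a r * Q ^ (n + r + 1)) n := by
    rw [SS, SS, SS, ← Summable.tsum_sub (SS_summable _ _ _ _) (SS_summable _ _ _ _)]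
    congr 1
    funext r
    have := rq_step hQ ((n : ℤ) + r + 1)
    rw [show (n : ℤ) + (0 : ℕ) + r = n + r + 1 - 1 by push_cast; ring, this,
      show (n : ℤ) + (1 : ℕ) + r = n + r + 1 by push_cast; ring]
    ring
  rw [this, h, sub_zero]

lemma SS_X_rec {Q : ℂ} (hQ0 : Q ≠ 0) (hQ : ‖Q‖ < 1) (a : ℤ → ℂ) (n : ℕ) :
    (1 - Q ^ (2 * n + 2)) * SS Q 0 a (n + 1) =
      SS Q 1 a n + SS Q 1 (fun r => a (r + 1) * Q ^ (n - r)) n := by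
  have h2 : SS Q 1 (fun r => a (r + 1) * Q ^ (n - r)) n =
      ∑' r : ℤ, a r * Q ^ (n + 1 - r) * (rq Q (n + 1 - r) * rq Q (n + r)) := by
    symm
    rw [SS, ← (Equiv.addRight (1 : ℤ)).tsum_eq]
    congr 1
    funext r
    simp only [Equiv.coe_addRight]
    rw [show (n : ℤ) + 1 - (r + 1) = n - r by ring,
      show (n : ℤ) + (r + 1) = n + (1 : ℕ) + r by push_cast; ring]
  have hs : Summable (fun r : ℤ => a r * Q ^ (n + 1 - r) * (rq Q (n + 1 - r) * rq Q (n + r))) := by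
    have := SS_summable Q 1 (fun r => a (r + 1) * Q ^ (n - r)) n
    rw [← (Equiv.addRight (1 : ℤ)).summable_iff]
    convert this using 2 with r
    simp only [Function.comp, Equiv.coe_addRight]
    rw [show (n : ℤ) + 1 - (r + 1) = n - r by ring,
      show (n : ℤ) + (r + 1) = n + (1 : ℕ) + r by push_cast; ring]
  rw [h2, SS, SS, ← Summable.tsum_add (SS_summable _ _ _ _) hs, ← tsum_mul_left]
  congr 1
  funext r
  have e1 := rq_step hQ ((n : ℤ) + 1 + r)
  have e2 := rq_step hQ ((n : ℤ) + 1 - r)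
  rw [show (n : ℤ) + 1 + r - 1 = n + r by ring] at e1
  rw [show (n : ℤ) + 1 - r - 1 = n - r by ring] at e2
  rw [e1, e2]
  have e3 : Q ^ (2 * n + 2) = Q ^ ((n : ℤ) + 1 - r) * Q ^ ((n : ℤ) + 1 + r) := by
    rw [← zpow_add₀ hQ0, ← zpow_natCast]; congr 1; push_cast; ring
  rw [e3]
  push_cast
  rw [add_zero]
  ring

lemma SS_Y_rec {Q : ℂ} (hQ0 : Q ≠ 0) (hQ : ‖Q‖ < 1) (a : ℤ → ℂ) (n : ℕ) :
    (1 - Q ^ (2 * n + 1)) * SS Q 1 a n =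
      SS Q 0 a n + SS Q 0 (fun r => a (r - 1) * Q ^ (n + r)) n := by
  have h2 : SS Q 0 (fun r => a (r - 1) * Q ^ (n + r)) n =
      ∑' r : ℤ, a r * Q ^ (n + 1 + r) * (rq Q (n - r - 1) * rq Q (n + 1 + r)) := by
    rw [SS, ← (Equiv.addRight (1 : ℤ)).tsum_eq]
    congr 1
    funext r
    simp only [Equiv.coe_addRight]
    rw [show r + 1 - 1 = r by ring, show (n : ℤ) - (r + 1) = n - r - 1 by ring,
      show (n : ℤ) + (0 : ℕ) + (r + 1) = n + 1 + r by push_cast; ring,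
      show (n : ℤ) + (r + 1) = n + 1 + r by ring]
  have hs : Summable (fun r : ℤ => a r * Q ^ (n + 1 + r) *
      (rq Q (n - r - 1) * rq Q (n + 1 + r))) := by
    have := SS_summable Q 0 (fun r => a (r - 1) * Q ^ (n + r)) n
    rw [← (Equiv.addRight (1 : ℤ)).summable_iff] at this
    convert this using 2 with r
    simp only [Function.comp, Equiv.coe_addRight]
    rw [show r + 1 - 1 = r by ring, show (n : ℤ) - (r + 1) = n - r - 1 by ring,
      show (n : ℤ) + (0 : ℕ) + (r + 1) = n + 1 + r by push_cast; ring,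
      show (n : ℤ) + (r + 1) = n + 1 + r by ring]
  rw [h2, SS, SS, ← Summable.tsum_add (SS_summable _ _ _ _) hs, ← tsum_mul_left]
  congr 1
  funext r
  have e1 := rq_step hQ ((n : ℤ) + 1 + r)
  have e2 := rq_step hQ ((n : ℤ) - r)
  rw [show (n : ℤ) + 1 + r - 1 = n + r by ring] at e1
  rw [e2]
  have e3 : Q ^ (2 * n + 1) = Q ^ ((n : ℤ) - r) * Q ^ ((n : ℤ) + 1 + r) := by
    rw [← zpow_add₀ hQ0, ← zpow_natCast]; congr 1; push_cast; ring
  rw [e3]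
  push_cast
  rw [add_zero, e1]
  ring

lemma SS_base0 (Q : ℂ) (a : ℤ → ℂ) : SS Q 0 a 0 = a 0 := by
  rw [SS, tsum_eq_single 0]
  · simp [rq, qPoch]
  · intro r hr
    rcases lt_or_gt_of_ne hr with h | h
    · rw [rq_neg Q (show ((0 : ℕ) + (0 : ℕ) + r : ℤ) < 0 by omega)]; simp
    · rw [rq_neg Q (show ((0 : ℕ) - r : ℤ) < 0 by omega)]; simp

lemma SS_congr (Q : ℂ) (e : ℕ) {a b : ℤ → ℂ} (h : ∀ r, a r = b r) (n : ℕ) :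
    SS Q e a n = SS Q e b n := by
  rw [show a = b from funext h]

lemma SS_smul (Q : ℂ) (e : ℕ) (c : ℂ) (a : ℤ → ℂ) (n : ℕ) :
    SS Q e (fun r => c * a r) n = c * SS Q e a n := by
  simp only [SS, ← tsum_mul_left, mul_assoc]

/-- Initial Bailey pair. -/
lemma base_pair {Q : ℂ} (hQ0 : Q ≠ 0) (hQ : ‖Q‖ < 1) (n : ℕ) :
    SS Q 0 (fun r => (-1) ^ r * Q ^ (r ^ 2)) n = (qPoch (Q ^ 2) (Q ^ 2) n)⁻¹ := by
  have ha : ∀ r : ℤ, (-1 : ℂ) ^ (-1 - r) * Q ^ ((-1 - r) ^ 2) =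
      - Q ^ (2 * r + 1) * ((-1) ^ r * Q ^ (r ^ 2)) := by
    intro r
    have e1 : Q ^ ((-1 - r) ^ 2) = Q ^ (2 * r + 1) * Q ^ (r ^ 2) := by
      rw [← zpow_add₀ hQ0]; congr 1; ring
    have e2 : (-1 : ℂ) ^ (-1 - r) = - (-1) ^ r := by
      rw [zpow_sub₀ (by norm_num), div_eq_mul_inv, ← inv_zpow]; norm_num
    rw [e1, e2]; ring
  induction n with
  | zero => rw [SS_base0]; simp [qPoch]
  | succ n ih =>
    have h := SS_X_rec hQ0 hQ (fun r => (-1) ^ r * Q ^ (r ^ 2)) n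
    have hz := SS_zero hQ0 (fun r => (-1) ^ r * Q ^ (r ^ 2)) n ha
    have h3 : SS Q 1 (fun r => (fun r => (-1) ^ r * Q ^ (r ^ 2)) (r + 1) * Q ^ (n - r)) n = 0 := by
      rw [← neg_eq_zero, ← hz, neg_eq_neg_one_mul, ← SS_smul]
      apply SS_congr
      intro r
      have e1 : Q ^ ((r + 1) ^ 2) * Q ^ ((n : ℤ) - r) = Q ^ (r ^ 2) * Q ^ ((n : ℤ) + r + 1) := by
        rw [← zpow_add₀ hQ0, ← zpow_add₀ hQ0]; congr 1; ring
      have e2 : (-1 : ℂ) ^ (r + 1) = - (-1) ^ r := by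
        rw [zpow_add₀ (by norm_num)]; norm_num
      simp only [e2]
      linear_combination (-1 : ℂ) ^ r * e1
    rw [h3, add_zero, ← SS_Y_eq_X hQ0 hQ _ n ha, ih] at h
    rw [qPoch_succ]
    have hQ2 : ‖Q ^ 2‖ < 1 := by rw [norm_pow]; exact pow_lt_one₀ (norm_nonneg _) hQ (by norm_num)
    have h1 := qPoch_ne_s10 hQ2 hQ2 n
    have h2 := one_sub_ne hQ2 hQ2 n
    have e : 1 - Q ^ (2 * n + 2) = 1 - Q ^ 2 * (Q ^ 2) ^ n := by ring
    rw [e] at h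
    rw [mul_inv, ← h]
    field_simp

/-- Finite Jacobi triple product. -/
lemma finite_jtp {Q p z : ℂ} (hQ : ‖Q‖ < 1) (hp : p ≠ 0) (hz : z ≠ 0) (hQp : Q = p ^ 2) (n : ℕ) :
    SS Q 0 (fun r => (-z) ^ r * p ^ (r ^ 2)) n =
      qPoch (p * z) Q n * qPoch (p / z) Q n * (qPoch Q Q (2 * n))⁻¹ := by
  have hQ0 : Q ≠ 0 := by rw [hQp]; positivity
  have hz' : -z ≠ 0 := neg_ne_zero.mpr hz
  have hQz : ∀ m : ℤ, Q ^ m = p ^ (2 * m) := by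
    intro m; rw [hQp, zpow_mul]; norm_cast
  induction n with
  | zero => rw [SS_base0]; simp [qPoch]
  | succ n ih =>
    have h := SS_X_rec hQ0 hQ (fun r => (-z) ^ r * p ^ (r ^ 2)) n
    have h' := SS_Y_rec hQ0 hQ (fun r => (-z) ^ r * p ^ (r ^ 2)) n
    have h3 : SS Q 1 (fun r => (fun r => (-z) ^ r * p ^ (r ^ 2)) (r + 1) * Q ^ (n - r)) n =
        (- (p * z * Q ^ n)) * SS Q 1 (fun r => (-z) ^ r * p ^ (r ^ 2)) n := by
      rw [← SS_smul]
      apply SS_congr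
      intro r
      have e1 : p ^ ((r + 1) ^ 2) * Q ^ ((n : ℤ) - r) = p * Q ^ n * p ^ (r ^ 2) := by
        rw [← zpow_natCast Q, hQz, hQz, ← zpow_add₀ hp, ← zpow_one_add₀ hp, ← zpow_add₀ hp]
        congr 1; ring
      have e2 : (-z) ^ (r + 1) = - z * (-z) ^ r := by
        rw [zpow_add₀ hz', zpow_one]; ring
      simp only [e2]
      linear_combination -z * (-z) ^ r * e1
    have h4 : SS Q 0 (fun r => (fun r => (-z) ^ r * p ^ (r ^ 2)) (r - 1) * Q ^ (n + r)) n =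
        (- (p / z * Q ^ n)) * SS Q 0 (fun r => (-z) ^ r * p ^ (r ^ 2)) n := by
      rw [← SS_smul]
      apply SS_congr
      intro r
      have e1 : p ^ ((r - 1) ^ 2) * Q ^ ((n : ℤ) + r) = p * Q ^ n * p ^ (r ^ 2) := by
        rw [← zpow_natCast Q, hQz, hQz, ← zpow_add₀ hp, ← zpow_one_add₀ hp, ← zpow_add₀ hp]
        congr 1; ring
      have e2 : (-z) ^ (r - 1) = - z⁻¹ * (-z) ^ r := by
        rw [zpow_sub₀ hz']; field_simp
      simp only [e2]
      linear_combination -z⁻¹ * (-z) ^ r * e1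
    rw [h3] at h
    rw [h4, ih] at h'
    rw [show 2 * (n + 1) = 2 * n + 1 + 1 by ring]
    simp only [qPoch_succ]
    have g1 := one_sub_ne hQ hQ (2 * n)
    have g2 := one_sub_ne hQ hQ (2 * n + 1)
    have g3 := qPoch_ne_s10 hQ hQ (2 * n)
    rw [show Q ^ (2 * n + 2) = Q * Q ^ (2 * n + 1) by ring] at h
    rw [show Q ^ (2 * n + 1) = Q * Q ^ (2 * n) by ring] at h'
    generalize SS Q 0 (fun r => (-z) ^ r * p ^ (r ^ 2)) (n + 1) = A at *
    generalize SS Q 1 (fun r => (-z) ^ r * p ^ (r ^ 2)) n = B at *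
    have hB : B = (1 - p / z * Q ^ n) * (qPoch (p * z) Q n * qPoch (p / z) Q n *
      (qPoch Q Q (2 * n))⁻¹) / (1 - Q * Q ^ (2 * n)) := by
      rw [eq_div_iff g1]; linear_combination h'
    have hA : A = (1 - p * z * Q ^ n) * B / (1 - Q * Q ^ (2 * n + 1)) := by
      rw [eq_div_iff g2]; linear_combination h
    rw [hA, hB]
    simp only [mul_inv, div_eq_mul_inv]
    ring

lemma rq_zero (Q : ℂ) : rq Q 0 = 1 := by simp [rq, qPoch]

lemma one_sub_pow_ne_s10 {Q : ℂ} (hQ : ‖Q‖ < 1) (n : ℕ) : 1 - Q ^ (n + 1) ≠ 0 := by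
  have := one_sub_ne hQ hQ n
  rwa [← pow_succ'] at this

lemma vand_s10 {Q : ℂ} (hQ0 : Q ≠ 0) (hQ : ‖Q‖ < 1) (N c : ℕ) :
    ∑ j ∈ Finset.range (N + 1), Q ^ (j * (j + c)) *
      (rq Q ((N : ℤ) - j) * rq Q j * rq Q ((j : ℤ) + c)) = rq Q N * rq Q ((N : ℤ) + c) := by
  induction N generalizing c with
  | zero => simp [rq_zero]
  | succ N ih =>
    have key : (1 - Q ^ (N + 1)) * ∑ j ∈ Finset.range (N + 1 + 1), Q ^ (j * (j + c)) *
        (rq Q (((N + 1 : ℕ) : ℤ) - j) * rq Q j * rq Q ((j : ℤ) + c)) =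
        ∑ j ∈ Finset.range (N + 1 + 1), Q ^ (j * (j + c)) *
          (rq Q ((N : ℤ) - j) * rq Q j * rq Q ((j : ℤ) + c)) +
        ∑ j ∈ Finset.range (N + 1 + 1), Q ^ (j * (j + c)) * Q ^ ((N : ℤ) + 1 - j) *
          (rq Q ((N : ℤ) + 1 - j) * rq Q ((j : ℤ) - 1) * rq Q ((j : ℤ) + c)) := by
      rw [Finset.mul_sum, ← Finset.sum_add_distrib]
      apply Finset.sum_congr rfl
      intro j _
      have e1 := rq_step hQ ((N : ℤ) + 1 - j)
      rw [show (N : ℤ) + 1 - j - 1 = N - j by ring] at e1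
      have e2 := rq_step hQ (j : ℤ)
      have e3 : Q ^ (N + 1) = Q ^ ((N : ℤ) + 1 - j) * Q ^ (j : ℤ) := by
        rw [← zpow_add₀ hQ0, ← zpow_natCast]; congr 1; push_cast; ring
      rw [e1, e2, e3]
      push_cast
      ring
    rw [Finset.sum_range_succ _ (N + 1), Finset.sum_range_succ _ (N + 1), ih,
      Finset.sum_range_succ' _ (N + 1)] at key
    have t1 : rq Q ((N : ℤ) - (N + 1 : ℕ)) = 0 := rq_neg _ (by push_cast; omega)
    have t2 : rq Q (((0 : ℕ) : ℤ) - 1) = 0 := rq_neg _ (by norm_num)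
    have t3 : ∑ j ∈ Finset.range (N + 1), Q ^ ((j + 1) * (j + 1 + c)) *
        Q ^ ((N : ℤ) + 1 - (j + 1 : ℕ)) * (rq Q ((N : ℤ) + 1 - (j + 1 : ℕ)) *
          rq Q (((j + 1 : ℕ) : ℤ) - 1) * rq Q (((j + 1 : ℕ) : ℤ) + c)) =
        Q ^ (N + c + 1) * (rq Q N * rq Q ((N : ℤ) + (c + 1 : ℕ))) := by
      rw [← ih (c + 1), Finset.mul_sum]
      apply Finset.sum_congr rfl
      intro j _
      have e3 : Q ^ ((j + 1) * (j + 1 + c)) * Q ^ ((N : ℤ) + 1 - (j + 1 : ℕ)) =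
          Q ^ (N + c + 1) * Q ^ (j * (j + (c + 1))) := by
        rw [← pow_add, ← zpow_natCast, ← zpow_natCast, ← zpow_add₀ hQ0]
        congr 1; push_cast; ring
      rw [e3, show (N : ℤ) + 1 - (j + 1 : ℕ) = N - j by push_cast; ring,
        show ((j + 1 : ℕ) : ℤ) - 1 = j by push_cast; ring,
        show ((j + 1 : ℕ) : ℤ) + c = j + (c + 1 : ℕ) by push_cast; ring]
      ring
    rw [t1, t2, t3] at key
    apply mul_left_cancel₀ (one_sub_pow_ne_s10 hQ N)
    rw [Finset.sum_range_succ, key]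
    have e1 := rq_step hQ ((N : ℤ) + 1 + c)
    have e2 := rq_step hQ ((N : ℤ) + 1)
    rw [show (N : ℤ) + 1 + c - 1 = N + c by ring] at e1
    rw [show (N : ℤ) + 1 - 1 = N by ring] at e2
    have e3 : Q ^ ((N : ℤ) + 1 + c) = Q ^ (N + c + 1) := by
      rw [← zpow_natCast]; congr 1; push_cast; ring
    have e4 : Q ^ ((N : ℤ) + 1) = Q ^ (N + 1) := by
      rw [← zpow_natCast]; congr 1
    rw [e3] at e1
    rw [e4] at e2
    rw [show ((N + 1 : ℕ) : ℤ) = N + 1 by push_cast; ring,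
      show (N : ℤ) + (c + 1 : ℕ) = N + 1 + c by push_cast; ring, e1, e2]
    ring

lemma qvand2 {Q : ℂ} (hQ0 : Q ≠ 0) (hQ : ‖Q‖ < 1) (b d : ℂ) (hbd : ‖b * d‖ < 1) (N : ℕ) :
    ∑ j ∈ Finset.range (N + 1), qPoch b Q j * (-d) ^ j * Q ^ (j.choose 2) *
      (rq Q ((N : ℤ) - j) * rq Q j) * (qPoch (b * d) Q j)⁻¹ =
      qPoch d Q N * rq Q N * (qPoch (b * d) Q N)⁻¹ := by
  induction N generalizing b with
  | zero => simp [rq_zero, qPoch]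
  | succ N ih =>
    have hbQ : ‖b * Q * d‖ < 1 := by
      rw [show b * Q * d = b * d * Q by ring, norm_mul]
      nlinarith [norm_nonneg Q, norm_nonneg (b * d)]
    have hb1 : 1 - b * d ≠ 0 := by simpa using one_sub_ne hQ hbd 0
    set G : ℕ → ℂ := fun j => qPoch b Q j * (-d) ^ j * Q ^ (j.choose 2) *
      (rq Q (((N + 1 : ℕ) : ℤ) - j) * rq Q j) * (qPoch (b * d) Q j)⁻¹ with hG
    have key : (1 - Q ^ (N + 1)) * ∑ j ∈ Finset.range (N + 1 + 1), G j =
        ∑ j ∈ Finset.range (N + 1 + 1), qPoch b Q j * (-d) ^ j * Q ^ (j.choose 2) *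
          (rq Q ((N : ℤ) - j) * rq Q j) * (qPoch (b * d) Q j)⁻¹ +
        ∑ j ∈ Finset.range (N + 1 + 1), qPoch b Q j * (-d) ^ j * Q ^ (j.choose 2) *
          Q ^ ((N : ℤ) + 1 - j) *
          (rq Q ((N : ℤ) + 1 - j) * rq Q ((j : ℤ) - 1)) * (qPoch (b * d) Q j)⁻¹ := by
      rw [Finset.mul_sum, ← Finset.sum_add_distrib]
      apply Finset.sum_congr rfl
      intro j _
      have e1 := rq_step hQ ((N : ℤ) + 1 - j)
      rw [show (N : ℤ) + 1 - j - 1 = N - j by ring] at e1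
      have e2 := rq_step hQ (j : ℤ)
      have e3 : Q ^ (N + 1) = Q ^ ((N : ℤ) + 1 - j) * Q ^ (j : ℤ) := by
        rw [← zpow_add₀ hQ0, ← zpow_natCast]; congr 1; push_cast; ring
      rw [e1, e2, e3, hG]
      push_cast
      ring
    rw [Finset.sum_range_succ _ (N + 1), Finset.sum_range_succ _ (N + 1), ih b hbd,
      Finset.sum_range_succ' _ (N + 1)] at key
    have t1 : rq Q ((N : ℤ) - (N + 1 : ℕ)) = 0 := rq_neg _ (by push_cast; omega)
    have t2 : rq Q (((0 : ℕ) : ℤ) - 1) = 0 := rq_neg _ (by norm_num)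
    have t3 : ∑ j ∈ Finset.range (N + 1), qPoch b Q (j + 1) * (-d) ^ (j + 1) *
        Q ^ ((j + 1).choose 2) * Q ^ ((N : ℤ) + 1 - (j + 1 : ℕ)) *
        (rq Q ((N : ℤ) + 1 - (j + 1 : ℕ)) * rq Q (((j + 1 : ℕ) : ℤ) - 1)) *
        (qPoch (b * d) Q (j + 1))⁻¹ =
        -d * Q ^ N * (1 - b) * (1 - b * d)⁻¹ * 
          (qPoch d Q N * rq Q N * (qPoch (b * Q * d) Q N)⁻¹) := by
      rw [← ih (b * Q) hbQ, Finset.mul_sum]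
      apply Finset.sum_congr rfl
      intro j _
      have e3 : Q ^ ((j + 1).choose 2) * Q ^ ((N : ℤ) + 1 - (j + 1 : ℕ)) =
          Q ^ N * Q ^ (j.choose 2) := by
        rw [← pow_add, ← zpow_natCast, ← zpow_natCast, ← zpow_add₀ hQ0]
        congr 1; rw [Nat.choose_succ_succ' j 1, Nat.choose_one_right]; push_cast; ring
      rw [mul_assoc (qPoch b Q (j + 1) * (-d) ^ (j + 1)), e3,
        show (N : ℤ) + 1 - (j + 1 : ℕ) = N - j by push_cast; ring,
        show ((j + 1 : ℕ) : ℤ) - 1 = j by push_cast; ring,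
        qPoch_succ', qPoch_succ', mul_inv, show b * d * Q = b * Q * d by ring]
      ring
    rw [t1, t2, t3] at key
    apply mul_left_cancel₀ (one_sub_pow_ne_s10 hQ N)
    rw [Finset.sum_range_succ, key]
    have e2 := rq_step hQ ((N : ℤ) + 1)
    rw [show (N : ℤ) + 1 - 1 = N by ring] at e2
    have e4 : Q ^ ((N : ℤ) + 1) = Q ^ (N + 1) := by
      rw [← zpow_natCast]; congr 1
    rw [e4] at e2
    have p1 := qPoch_succ (b * d) Q N
    have p2 := qPoch_succ' (b * d) Q N
    rw [show b * d * Q = b * Q * d by ring] at p2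
    have n1 := qPoch_ne_s10 hQ hbd N
    have n2 := qPoch_ne_s10 hQ hbQ N
    have n3 := qPoch_ne_s10 hQ hbd (N + 1)
    have n4 := one_sub_ne hQ hbd N
    have i1 : (qPoch (b * d) Q N)⁻¹ = (1 - b * d * Q ^ N) * (qPoch (b * d) Q (N + 1))⁻¹ := by
      rw [p1]; field_simp
    have i2 : (1 - b * d)⁻¹ * (qPoch (b * Q * d) Q N)⁻¹ = (qPoch (b * d) Q (N + 1))⁻¹ := by
      rw [p2, mul_inv]
    rw [show ((N + 1 : ℕ) : ℤ) = N + 1 by push_cast; ring, e2, i1, qPoch_succ d]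
    linear_combination (-d * Q ^ N * (1 - b)) *
      (qPoch d Q N * ((1 - Q ^ (N + 1)) * rq Q (N + 1))) * i2

lemma sum_shift (n r : ℕ) (hr : r ≤ n) (f : ℕ → ℂ) (hf : ∀ s < r, f s = 0) :
    ∑ s ∈ Finset.range (n + 1), f s = ∑ j ∈ Finset.range (n - r + 1), f (r + j) := by
  obtain ⟨m, rfl⟩ := Nat.exists_eq_add_of_le hr
  rw [add_assoc, Finset.sum_range_add, Finset.sum_eq_zero, zero_add, Nat.add_sub_cancel_left]
  intro s hs
  exact hf s (Finset.mem_range.mp hs)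

lemma bailey_nat {Q : ℂ} (hQ0 : Q ≠ 0) (hQ : ‖Q‖ < 1) (n r e : ℕ) :
    ∑ s ∈ Finset.range (n + 1), Q ^ (s ^ 2 + e * s) * rq Q ((n : ℤ) - s) *
      (rq Q ((s : ℤ) - r) * rq Q ((s : ℤ) + e + r)) =
      Q ^ (r ^ 2 + e * r) * (rq Q ((n : ℤ) - r) * rq Q ((n : ℤ) + e + r)) := by
  rcases lt_or_ge n r with h | h
  · rw [rq_neg Q (show (n : ℤ) - r < 0 by omega), Finset.sum_eq_zero]
    · simp
    · intro s hs
      rw [Finset.mem_range] at hs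
      rw [rq_neg Q (show (s : ℤ) - r < 0 by omega)]; simp
  · rw [sum_shift n r h]
    · have := vand_s10 hQ0 hQ (n - r) (2 * r + e)
      rw [show (n : ℤ) - r = ((n - r : ℕ) : ℤ) by omega,
        show (n : ℤ) + e + r = ((n - r : ℕ) : ℤ) + (2 * r + e : ℕ) by omega, ← this,
        Finset.mul_sum]
      apply Finset.sum_congr rfl
      intro j _
      rw [show (n : ℤ) - (r + j : ℕ) = ((n - r : ℕ) : ℤ) - j by omega,
        show ((r + j : ℕ) : ℤ) - r = j by omega,
        show ((r + j : ℕ) : ℤ) + e + r = j + (2 * r + e : ℕ) by push_cast; ring,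
        show (r + j) ^ 2 + e * (r + j) = r ^ 2 + e * r + j * (j + (2 * r + e)) by ring, pow_add]
      ring
    · intro s hs
      rw [rq_neg Q (show (s : ℤ) - r < 0 by omega)]; simp

lemma bailey_int {Q : ℂ} (hQ0 : Q ≠ 0) (hQ : ‖Q‖ < 1) (n e : ℕ) (r : ℤ) (he : e ≤ 1) :
    ∑ s ∈ Finset.range (n + 1), Q ^ (s ^ 2 + e * s) * rq Q ((n : ℤ) - s) *
      (rq Q ((s : ℤ) - r) * rq Q ((s : ℤ) + e + r)) =
      Q ^ (r ^ 2 + e * r) * (rq Q ((n : ℤ) - r) * rq Q ((n : ℤ) + e + r)) := by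
  rcases le_or_gt 0 r with h | h
  · obtain ⟨k, rfl⟩ := Int.eq_ofNat_of_zero_le h
    rw [bailey_nat hQ0 hQ]
    norm_cast
  · obtain ⟨k, hk⟩ := Int.eq_ofNat_of_zero_le (show 0 ≤ -(e : ℤ) - r by omega)
    have hr : r = -(e : ℤ) - k := by omega
    have := bailey_nat hQ0 hQ n k e
    rw [hr, show (n : ℤ) - (-(e : ℤ) - k) = n + e + k by ring,
      show (n : ℤ) + e + (-(e : ℤ) - k) = n - k by ring, mul_comm (rq Q ((n : ℤ) + e + k)),
      show Q ^ ((-(e : ℤ) - k) ^ 2 + e * (-(e : ℤ) - k)) = Q ^ (k ^ 2 + e * k) by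
        rw [← zpow_natCast]; congr 1; push_cast; ring, ← this]
    apply Finset.sum_congr rfl
    intro s _
    rw [show (s : ℤ) - (-(e : ℤ) - k) = s + e + k by ring,
      show (s : ℤ) + e + (-(e : ℤ) - k) = s - k by ring]
    ring

lemma final_nat {q Q : ℂ} (hq0 : q ≠ 0) (hq : ‖q‖ < 1) (hQq : Q = q ^ 2) (n r : ℕ) :
    ∑ s ∈ Finset.range (n + 1), qPoch (-q) Q s * q ^ (s ^ 2) * rq Q ((n : ℤ) - s) *
      (rq Q ((s : ℤ) - r) * rq Q ((s : ℤ) + r)) =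
      qPoch (-q) Q n * q ^ (r ^ 2) * (rq Q ((n : ℤ) - r) * rq Q ((n : ℤ) + r)) := by
  have hQ : ‖Q‖ < 1 := by
    rw [hQq, norm_pow]; exact pow_lt_one₀ (norm_nonneg _) hq (by norm_num)
  have hQ0 : Q ≠ 0 := by rw [hQq]; positivity
  rcases lt_or_ge n r with h | h
  · rw [rq_neg Q (show (n : ℤ) - r < 0 by omega), Finset.sum_eq_zero]
    · simp
    · intro s hs
      rw [Finset.mem_range] at hs
      rw [rq_neg Q (show (s : ℤ) - r < 0 by omega)]; simp
  · rw [sum_shift n r h]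
    · have hbd : -q ^ (2 * r + 1) * -q ^ (2 * r + 1) = Q * Q ^ (2 * r) := by rw [hQq]; ring
      have hbn : ‖-q ^ (2 * r + 1) * -q ^ (2 * r + 1)‖ < 1 := by
        rw [hbd, ← pow_succ', norm_pow]; exact pow_lt_one₀ (norm_nonneg _) hQ (by omega)
      have := qvand2 hQ0 hQ (-q ^ (2 * r + 1)) (-q ^ (2 * r + 1)) hbn (n - r)
      rw [hbd] at this
      have hpq : ∀ j, qPoch (-q) Q (r + j) = qPoch (-q) Q r * qPoch (-q ^ (2 * r + 1)) Q j := by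
        intro j; rw [qPoch_add, hQq]; congr 2; ring
      have hrq : ∀ j : ℕ, rq Q ((j : ℤ) + 2 * r) =
          (qPoch Q Q (2 * r))⁻¹ * (qPoch (Q * Q ^ (2 * r)) Q j)⁻¹ := by
        intro j
        rw [show (j : ℤ) + 2 * r = ((2 * r + j : ℕ) : ℤ) by push_cast; ring, rq_nat, qPoch_add,
          mul_inv]
      rw [show (n : ℤ) - r = ((n - r : ℕ) : ℤ) by omega,
        show (n : ℤ) + r = ((n - r : ℕ) : ℤ) + 2 * r by omega, hrq,
        show qPoch (-q) Q n = qPoch (-q) Q (r + (n - r)) by congr 1; omega, hpq]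
      trans qPoch (-q) Q r * q ^ (r ^ 2) * (qPoch Q Q (2 * r))⁻¹ *
        (qPoch (-q ^ (2 * r + 1)) Q (n - r) * rq Q (n - r : ℕ) *
          (qPoch (Q * Q ^ (2 * r)) Q (n - r))⁻¹)
      · rw [← this, Finset.mul_sum]
        apply Finset.sum_congr rfl
        intro j _
        have hj : q ^ ((r + j) ^ 2) = q ^ (r ^ 2) * ((- -q ^ (2 * r + 1)) ^ j * Q ^ (j.choose 2)) := by
          have : 2 * j.choose 2 + j = j * j := by
            rw [Nat.choose_two_right, Nat.mul_div_cancel' (Nat.even_mul_pred_self j).two_dvd]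
            cases j with
            | zero => rfl
            | succ j => simp; ring
          rw [neg_neg, hQq, ← pow_mul, ← pow_mul, ← pow_add, ← pow_add]
          congr 1
          nlinarith [this]
        rw [show (n : ℤ) - (r + j : ℕ) = ((n - r : ℕ) : ℤ) - j by omega,
          show ((r + j : ℕ) : ℤ) - r = j by omega,
          show ((r + j : ℕ) : ℤ) + r = j + 2 * r by push_cast; ring, hrq, hpq, hj]
        ring
      · ring
    · intro s hs
      rw [rq_neg Q (show (s : ℤ) - r < 0 by omega)]; simp

lemma final_int {q Q : ℂ} (hq0 : q ≠ 0) (hq : ‖q‖ < 1) (hQq : Q = q ^ 2) (n : ℕ) (r : ℤ) :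
    ∑ s ∈ Finset.range (n + 1), qPoch (-q) Q s * q ^ (s ^ 2) * rq Q ((n : ℤ) - s) *
      (rq Q ((s : ℤ) - r) * rq Q ((s : ℤ) + r)) =
      qPoch (-q) Q n * q ^ (r ^ 2) * (rq Q ((n : ℤ) - r) * rq Q ((n : ℤ) + r)) := by
  obtain ⟨k, rfl | rfl⟩ := Int.eq_nat_or_neg r
  · rw [final_nat hq0 hq hQq]; norm_cast
  · simp only [sub_neg_eq_add, ← sub_eq_add_neg, neg_sq]
    have := final_nat hq0 hq hQq n k
    rw [mul_comm (rq Q ((n : ℤ) + k))]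
    rw [show q ^ ((k : ℤ) ^ 2) = q ^ (k ^ 2) by norm_cast, ← this]
    apply Finset.sum_congr rfl
    intro s _
    ring

lemma SS_bailey {Q : ℂ} (hQ0 : Q ≠ 0) (hQ : ‖Q‖ < 1) (n e : ℕ) (he : e ≤ 1) (a : ℤ → ℂ) :
    ∑ s ∈ Finset.range (n + 1), Q ^ (s ^ 2 + e * s) * rq Q ((n : ℤ) - s) * SS Q e a s =
      SS Q e (fun r => a r * Q ^ (r ^ 2 + e * r)) n := by
  simp only [SS, ← tsum_mul_left]
  rw [← Summable.tsum_finsetSum]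
  · congr 1
    funext r
    rw [mul_assoc (a r), ← bailey_int hQ0 hQ n e r he, Finset.mul_sum]
    apply Finset.sum_congr rfl
    intro s _
    ring
  · intro s _
    exact (SS_summable _ _ _ _).mul_left _

lemma SS_final {q Q : ℂ} (hq0 : q ≠ 0) (hq : ‖q‖ < 1) (hQq : Q = q ^ 2) (n : ℕ) (a : ℤ → ℂ) :
    ∑ s ∈ Finset.range (n + 1), qPoch (-q) Q s * q ^ (s ^ 2) * rq Q ((n : ℤ) - s) * SS Q 0 a s =
      qPoch (-q) Q n * SS Q 0 (fun r => a r * q ^ (r ^ 2)) n := by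
  simp only [SS, ← tsum_mul_left]
  rw [← Summable.tsum_finsetSum]
  · congr 1
    funext r
    have := final_int hq0 hq hQq n r
    simp only [Nat.cast_zero, add_zero]
    trans a r * (qPoch (-q) Q n * q ^ r ^ 2 * (rq Q (↑n - r) * rq Q (↑n + r)))
    · rw [← this, Finset.mul_sum]
      apply Finset.sum_congr rfl
      intro s _
      ring
    · ring
  · intro s _
    exact (SS_summable _ _ _ _).mul_left _

/-- The chain of `β`s. -/
noncomputable def bet (Q : ℂ) (d : ℕ) : ℕ → ℕ → ℂ
  | 0, n => (qPoch (Q ^ 2) (Q ^ 2) n)⁻¹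
  | m + 1, n => ∑ s ∈ Finset.range (n + 1),
      Q ^ (s ^ 2 + (if m < d then 1 else 0) * s) * rq Q ((n : ℤ) - s) * bet Q d m s

lemma chain_symm {Q : ℂ} (hQ0 : Q ≠ 0) (m : ℕ) (r : ℤ) :
    (-1 : ℂ) ^ (-1 - r) * Q ^ ((m + 1) * (-1 - r) ^ 2 + m * (-1 - r)) =
      - Q ^ (2 * r + 1) * ((-1) ^ r * Q ^ ((m + 1) * r ^ 2 + m * r)) := by
  have e1 : Q ^ ((m + 1) * (-1 - r) ^ 2 + m * (-1 - r)) =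
      Q ^ (2 * r + 1) * Q ^ ((m + 1) * r ^ 2 + m * r) := by
    rw [← zpow_add₀ hQ0]; congr 1; ring
  have e2 : (-1 : ℂ) ^ (-1 - r) = - (-1) ^ r := by
    rw [zpow_sub₀ (by norm_num), div_eq_mul_inv, ← inv_zpow]; norm_num
  rw [e1, e2]; ring

lemma bet_lo {Q : ℂ} (hQ0 : Q ≠ 0) (hQ : ‖Q‖ < 1) (d m : ℕ) (hm : m ≤ d) (n : ℕ) :
    bet Q d m n = SS Q 1 (fun r => (-1) ^ r * Q ^ ((m + 1) * r ^ 2 + m * r)) n := by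
  induction m generalizing n with
  | zero =>
    rw [← SS_Y_eq_X hQ0 hQ _ _ (chain_symm hQ0 0)]
    rw [bet, ← base_pair hQ0 hQ]
    apply SS_congr
    intro r
    congr 2; push_cast; ring
  | succ m ih =>
    rw [bet, if_pos (by omega)]
    simp only [ih (by omega)]
    rw [SS_bailey hQ0 hQ n 1 le_rfl]
    apply SS_congr
    intro r
    rw [mul_assoc, ← zpow_add₀ hQ0]
    congr 2; push_cast; ring

lemma bet_hi {Q : ℂ} (hQ0 : Q ≠ 0) (hQ : ‖Q‖ < 1) (d m : ℕ) (n : ℕ) :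
    bet Q d (d + m) n = SS Q 0 (fun r => (-1) ^ r * Q ^ ((d + m + 1) * r ^ 2 + d * r)) n := by
  induction m generalizing n with
  | zero =>
    rw [add_zero, bet_lo hQ0 hQ d d le_rfl, ← SS_Y_eq_X hQ0 hQ _ _ (chain_symm hQ0 d)]
    apply SS_congr
    intro r
    congr 2
  | succ m ih =>
    rw [← add_assoc, bet, if_neg (by omega)]
    simp only [ih]
    rw [SS_bailey hQ0 hQ n 0 (by omega)]
    apply SS_congr
    intro r
    rw [mul_assoc, ← zpow_add₀ hQ0]
    congr 2; push_cast; ring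

open Filter Topology in
lemma tendsto_qPoch {Q : ℂ} (hQ : ‖Q‖ < 1) (x : ℂ) :
    Tendsto (qPoch x Q) atTop (𝓝 (qPochInf x Q)) := by
  have hs : Summable (fun j : ℕ => ‖-(x * Q ^ j)‖) := by
    simp only [norm_neg, norm_mul, norm_pow]
    exact (summable_geometric_of_lt_one (norm_nonneg _) hQ).mul_left _
  have := (multipliable_one_add_of_summable hs).tendsto_prod_tprod_nat
  simp only [← sub_eq_add_neg] at this
  exact this

lemma qPochInf_ne_s10 {Q x : ℂ} (hQ : ‖Q‖ < 1) (hx : ‖x‖ < 1) : qPochInf x Q ≠ 0 := by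
  have hs : Summable (fun j : ℕ => ‖-(x * Q ^ j)‖) := by
    simp only [norm_neg, norm_mul, norm_pow]
    exact (summable_geometric_of_lt_one (norm_nonneg _) hQ).mul_left _
  have := tprod_one_add_ne_zero_of_summable (f := fun j : ℕ => -(x * Q ^ j))
    (by intro j; rw [← sub_eq_add_neg]; exact one_sub_ne hQ hx j) hs
  simp only [← sub_eq_add_neg] at this
  exact this

open Filter Topology in
lemma bdd_of_tendsto {u : ℕ → ℂ} {l : ℂ} (h : Tendsto u atTop (𝓝 l)) : ∃ C, 0 ≤ C ∧ ∀ n, ‖u n‖ ≤ C := by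
  obtain ⟨C, hC⟩ := (Metric.isBounded_range_of_tendsto u h).exists_norm_le
  have hC' : ∀ n, ‖u n‖ ≤ C := fun n => hC _ ⟨n, rfl⟩
  exact ⟨C, (norm_nonneg _).trans (hC' 0), hC'⟩

open Filter Topology in
lemma tendsto_rq {Q : ℂ} (hQ : ‖Q‖ < 1) (c : ℤ) :
    Tendsto (fun n : ℕ => rq Q ((n : ℤ) + c)) atTop (𝓝 (qPochInf Q Q)⁻¹) := by
  have h1 := (tendsto_qPoch hQ Q).inv₀ (qPochInf_ne_s10 hQ hQ)
  have h2 : Tendsto (fun n : ℕ => ((n : ℤ) + c).toNat) atTop atTop := by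
    rw [tendsto_atTop]
    intro b
    filter_upwards [eventually_ge_atTop (b + c.natAbs)] with n hn
    omega
  refine (h1.comp h2).congr' ?_
  filter_upwards [eventually_ge_atTop c.natAbs] with n hn
  simp only [Function.comp, rq]
  rw [if_pos (by omega)]

lemma rq_bdd {Q : ℂ} (hQ : ‖Q‖ < 1) : ∃ C, 0 ≤ C ∧ ∀ m : ℤ, ‖rq Q m‖ ≤ C := by
  obtain ⟨C, h0, hC⟩ := bdd_of_tendsto (tendsto_rq hQ 0)
  refine ⟨C, h0, fun m => ?_⟩
  rcases lt_or_ge m 0 with h | h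
  · rw [rq_neg Q h]; simpa using h0
  · have := hC m.toNat
    rwa [show ((m.toNat : ℤ) + 0) = m by omega] at this

open Filter Topology in
lemma SS_lim {Q : ℂ} (hQ : ‖Q‖ < 1) (a : ℤ → ℂ) (ha : Summable (fun r => ‖a r‖)) :
    Tendsto (SS Q 0 a) atTop (𝓝 ((∑' r, a r) * ((qPochInf Q Q)⁻¹ * (qPochInf Q Q)⁻¹))) := by
  obtain ⟨C, h0, hC⟩ := rq_bdd hQ
  rw [← tsum_mul_right]
  refine tendsto_tsum_of_dominated_convergence (bound := fun r => ‖a r‖ * (C * C))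
    (ha.mul_right _) ?_ ?_
  · intro r
    refine Tendsto.const_mul _ (Tendsto.mul ?_ ?_)
    · exact (tendsto_rq hQ (-r)).congr (fun n => by rw [sub_eq_add_neg])
    · exact (tendsto_rq hQ r).congr (fun n => by simp)
  · filter_upwards with n r
    rw [norm_mul, norm_mul]
    gcongr <;> exact hC _

lemma summable_natAbs {x : ℝ} (h0 : 0 ≤ x) (h1 : x < 1) : Summable (fun r : ℤ => x ^ r.natAbs) := by
  apply Summable.of_nat_of_neg
  · simpa using summable_geometric_of_lt_one h0 h1
  · simpa using summable_geometric_of_lt_one h0 h1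

lemma theta_summable {q : ℂ} (hq0 : q ≠ 0) (hq : ‖q‖ < 1) (k d : ℕ) (hd : d < k) :
    Summable (fun r : ℤ => ‖(-q ^ (2 * d)) ^ r * (q ^ (2 * k + 1)) ^ (r ^ 2)‖) := by
  refine Summable.of_nonneg_of_le (fun _ => norm_nonneg _) (fun r => ?_)
    (summable_natAbs (norm_nonneg q) hq)
  have hn : 0 < ‖q‖ := norm_pos_iff.mpr hq0
  rw [norm_mul, norm_zpow, norm_zpow, norm_neg, norm_pow, norm_pow, ← zpow_natCast, ← zpow_natCast,
    ← zpow_natCast, ← zpow_mul, ← zpow_mul, ← zpow_add₀ hn.ne']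
  apply zpow_le_zpow_right_of_le_one₀ hn hq.le
  push_cast
  have h1 : |r| ≤ r ^ 2 := by
    rw [← sq_abs]
    rcases (abs_nonneg r).eq_or_lt with h | h
    · rw [← h]; simp
    · nlinarith
  have h2 := neg_abs_le r
  have h3 : (d : ℤ) + 1 ≤ k := by exact_mod_cast hd
  have h4 : (0 : ℤ) ≤ d := by positivity
  nlinarith [mul_le_mul_of_nonneg_left h2 h4, mul_le_mul_of_nonneg_left h1 h4, sq_nonneg r,
    mul_le_mul_of_nonneg_right h3 (sq_nonneg r)]

/-- Jacobi triple product in the shape needed. -/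
lemma theta_prod {q : ℂ} (hq0 : q ≠ 0) (hq : ‖q‖ < 1) (k i : ℕ) (hi1 : 1 ≤ i) (hik : i ≤ k) :
    ∑' r : ℤ, (-q ^ (2 * (k - i))) ^ r * (q ^ (2 * k + 1)) ^ (r ^ 2) =
      qPochInf (q ^ (4 * k + 2)) (q ^ (4 * k + 2)) *
          qPochInf (q ^ (2 * i + 1)) (q ^ (4 * k + 2)) *
          qPochInf (q ^ (4 * k - 2 * i + 1)) (q ^ (4 * k + 2)) := by
  set Q := q ^ (4 * k + 2) with hQdef
  have hQ : ‖Q‖ < 1 := by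
    rw [hQdef, norm_pow]; exact pow_lt_one₀ (norm_nonneg _) hq (by omega)
  have hp : q ^ (2 * k + 1) ≠ 0 := pow_ne_zero _ hq0
  have hz : q ^ (2 * (k - i)) ≠ 0 := pow_ne_zero _ hq0
  have hQp : Q = (q ^ (2 * k + 1)) ^ 2 := by rw [hQdef, ← pow_mul]; congr 1; ring
  have h1 := SS_lim hQ _ (theta_summable hq0 hq k (k - i) (by omega))
  have h2 : SS Q 0 (fun r => (-q ^ (2 * (k - i))) ^ r * (q ^ (2 * k + 1)) ^ (r ^ 2)) = _ :=
    funext (fun n => finite_jtp hQ hp hz hQp n)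
  rw [h2] at h1
  have e1 : q ^ (2 * k + 1) * q ^ (2 * (k - i)) = q ^ (4 * k - 2 * i + 1) := by
    rw [← pow_add]; congr 1; omega
  have e2 : q ^ (2 * k + 1) / q ^ (2 * (k - i)) = q ^ (2 * i + 1) := by
    rw [div_eq_iff hz, ← pow_add]; congr 1; omega
  rw [e1, e2] at h1
  have hne := qPochInf_ne_s10 hQ hQ
  have h3 := ((tendsto_qPoch hQ (q ^ (4 * k - 2 * i + 1))).mul
    (tendsto_qPoch hQ (q ^ (2 * i + 1)))).mul
    (((tendsto_qPoch hQ Q).inv₀ hne).comp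
      (Filter.tendsto_atTop_mono (fun n => (by omega : n ≤ 2 * n)) Filter.tendsto_id))
  have := tendsto_nhds_unique h1 h3
  field_simp at this
  linear_combination this

lemma summable_pi {x : ℝ} (h0 : 0 ≤ x) (h1 : x < 1) (m : ℕ) :
    Summable (fun s : Fin m → ℕ => ∏ j, x ^ (s j)) := by
  induction m with
  | zero => exact (hasSum_unique _).summable
  | succ m ih =>
    rw [← (Fin.consEquiv (fun _ => ℕ)).summable_iff]
    have := (summable_geometric_of_lt_one h0 h1).mul_of_nonneg ih (fun _ => by positivity)
      (fun _ => by positivity)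
    convert this using 2 with p
    simp [Fin.prod_univ_succ]

/-- Weight of a tuple below `n`. -/
noncomputable def VV (Q : ℂ) (d : ℕ) : (m : ℕ) → ℕ → (Fin m → ℕ) → ℂ
  | 0, n, _ => (qPoch (Q ^ 2) (Q ^ 2) n)⁻¹
  | m + 1, n, s => Q ^ (s 0 ^ 2 + (if m < d then 1 else 0) * s 0) * rq Q ((n : ℤ) - s 0) *
      VV Q d m (s 0) (Fin.tail s)

lemma pow_bd {Q : ℂ} (hQ : ‖Q‖ < 1) (s e : ℕ) : ‖Q ^ (s ^ 2 + e * s)‖ ≤ ‖Q‖ ^ s := by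
  rw [norm_pow]
  apply pow_le_pow_of_le_one (norm_nonneg _) hQ.le
  nlinarith [Nat.le_self_pow (n := 2) (by norm_num) s, Nat.zero_le (e * s)]

lemma VV_bdd {Q : ℂ} (hQ : ‖Q‖ < 1) (d m : ℕ) : ∃ C, 0 ≤ C ∧ ∀ n (s : Fin m → ℕ),
    ‖VV Q d m n s‖ ≤ C * ∏ j, ‖Q‖ ^ (s j) := by
  induction m with
  | zero =>
    have hQ2 : ‖Q ^ 2‖ < 1 := by rw [norm_pow]; exact pow_lt_one₀ (norm_nonneg _) hQ (by norm_num)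
    obtain ⟨C, h0, hC⟩ := rq_bdd hQ2
    refine ⟨C, h0, fun n s => ?_⟩
    have := hC n
    rw [rq_nat] at this
    simpa [VV] using this
  | succ m ih =>
    obtain ⟨C, h0, hC⟩ := ih
    obtain ⟨D, g0, hD⟩ := rq_bdd hQ
    refine ⟨D * C, by positivity, fun n s => ?_⟩
    rw [VV, norm_mul, norm_mul, Fin.prod_univ_succ]
    calc _ ≤ ‖Q‖ ^ (s 0) * D * (C * ∏ j, ‖Q‖ ^ (Fin.tail s j)) := by
          gcongr
          · exact pow_bd hQ _ _
          · exact hD _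
          · exact hC _ _
      _ = _ := by simp only [Fin.tail]; ring

lemma VV_summable {Q : ℂ} (hQ : ‖Q‖ < 1) (d m n : ℕ) : Summable (VV Q d m n) := by
  obtain ⟨C, h0, hC⟩ := VV_bdd hQ d m
  exact Summable.of_norm_bounded ((summable_pi (norm_nonneg _) hQ m).mul_left C) (hC n)

lemma cons_tsum {m : ℕ} (F : (Fin (m + 1) → ℕ) → ℂ) (hF : Summable F) :
    ∑' s, F s = ∑' a : ℕ, ∑' s : Fin m → ℕ, F (Fin.cons a s) := by
  rw [← (Fin.consEquiv (fun _ => ℕ)).tsum_eq]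
  have := (Fin.consEquiv (fun _ : Fin (m + 1) => ℕ)).summable_iff.mpr hF
  exact this.tsum_prod

lemma VV_sum {Q : ℂ} (hQ : ‖Q‖ < 1) (d m n : ℕ) : ∑' s, VV Q d m n s = bet Q d m n := by
  induction m generalizing n with
  | zero => 
    rw [(hasSum_unique (VV Q d 0 n)).tsum_eq]; rfl
  | succ m ih =>
    rw [cons_tsum _ (VV_summable hQ d _ n)]
    simp only [VV, Fin.cons_zero, Fin.tail_cons, tsum_mul_left, ih]
    rw [bet]
    apply tsum_eq_sum
    intro a ha
    rw [Finset.mem_range, not_lt] at ha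
    rw [rq_neg Q (show (n : ℤ) - a < 0 by omega)]; simp

/-- Full weight. -/
noncomputable def WW (q Q : ℂ) (d m : ℕ) (s : Fin (m + 1) → ℕ) : ℂ :=
  qPoch (-q) Q (s 0) * q ^ (s 0 ^ 2) * VV Q d m (s 0) (Fin.tail s)

lemma WW_bdd {q Q : ℂ} (hq : ‖q‖ < 1) (hQq : Q = q ^ 2) (d m : ℕ) : ∃ C, 0 ≤ C ∧
    ∀ (s : Fin (m + 1) → ℕ), ‖WW q Q d m s‖ ≤ C * ∏ j, ‖q‖ ^ (s j) := by
  have hQ : ‖Q‖ < 1 := by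
    rw [hQq, norm_pow]; exact pow_lt_one₀ (norm_nonneg _) hq (by norm_num)
  obtain ⟨C, h0, hC⟩ := VV_bdd hQ d m
  obtain ⟨D, g0, hD⟩ := bdd_of_tendsto (tendsto_qPoch hQ (-q))
  refine ⟨D * C, by positivity, fun s => ?_⟩
  have hle : ‖Q‖ ≤ ‖q‖ := by
    rw [hQq, norm_pow]; nlinarith [norm_nonneg q]
  rw [WW, norm_mul, norm_mul, Fin.prod_univ_succ]
  calc _ ≤ D * ‖q‖ ^ (s 0) * (C * ∏ j, ‖q‖ ^ (Fin.tail s j)) := by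
        gcongr
        · exact hD _
        · simpa using pow_bd hq (s 0) 0
        · refine (hC _ _).trans ?_
          gcongr
    _ = _ := by simp only [Fin.tail]; ring

open Filter Topology in
lemma WW_sum {q : ℂ} (hq0 : q ≠ 0) (hq : ‖q‖ < 1) (k i m : ℕ) (hi1 : 1 ≤ i)
    (hik : i ≤ k) (hm : k = m + 1) :
    ∑' s, WW q (q ^ 2) (k - i) m s = qPochInf (-q) (q ^ 2) / qPochInf (q ^ 2) (q ^ 2) *
      ∑' r : ℤ, (-q ^ (2 * (k - i))) ^ r * (q ^ (2 * k + 1)) ^ (r ^ 2) := by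
  set Q := q ^ 2 with hQq
  have hQ : ‖Q‖ < 1 := by
    rw [hQq, norm_pow]; exact pow_lt_one₀ (norm_nonneg _) hq (by norm_num)
  have hQ0 : Q ≠ 0 := pow_ne_zero _ hq0
  obtain ⟨C, h0, hC⟩ := WW_bdd hq hQq (k - i) m
  obtain ⟨D, g0, hD⟩ := rq_bdd hQ
  have hsum := (summable_pi (norm_nonneg _) hq (m + 1)).mul_left (D * C)
  have hb : ∀ (n : ℕ) s, ‖rq Q ((n : ℤ) - s 0) * WW q Q (k - i) m s‖ ≤
      D * C * ∏ j, ‖q‖ ^ (s j) := by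
    intro n s
    rw [norm_mul, mul_assoc]
    gcongr
    · exact hD _
    · exact hC _
  have fin : ∀ n : ℕ, ∑' s, rq Q ((n : ℤ) - s 0) * WW q Q (k - i) m s =
      qPoch (-q) Q n *
        SS Q 0 (fun r => (-q ^ (2 * (k - i))) ^ r * (q ^ (2 * k + 1)) ^ (r ^ 2)) n := by
    intro n
    rw [cons_tsum _ (Summable.of_norm_bounded hsum (hb n))]
    simp only [WW, Fin.cons_zero, Fin.tail_cons, tsum_mul_left, VV_sum hQ]
    rw [tsum_eq_sum (s := Finset.range (n + 1))]
    · have hmd : m = (k - i) + (i - 1) := by omega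
      have := SS_final hq0 hq hQq n
        (fun r => (-1) ^ r * Q ^ ((((k - i : ℕ) : ℤ) + (i - 1 : ℕ) + 1) * r ^ 2 + (k - i : ℕ) * r))
      simp only [← bet_hi hQ0 hQ, ← hmd] at this
      trans qPoch (-q) Q n * SS Q 0 (fun r => (-1) ^ r * Q ^ ((((k - i : ℕ) : ℤ) + (i - 1 : ℕ) + 1) * r ^ 2 + (k - i : ℕ) * r) * q ^ (r ^ 2)) n
      · rw [← this]
        apply Finset.sum_congr rfl
        intro s _
        ring
      · congr 1
        apply SS_congr
        intro r
        have hQz : ∀ m : ℤ, Q ^ m = q ^ (2 * m) := by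
          intro m; rw [hQq, zpow_mul]; norm_cast
        rw [neg_eq_neg_one_mul (q ^ _), mul_zpow, mul_assoc, mul_assoc, hQz, ← zpow_natCast,
          ← zpow_natCast, ← zpow_mul, ← zpow_mul, ← zpow_add₀ hq0, ← zpow_add₀ hq0]
        congr 2
        rw [show ((k - i : ℕ) : ℤ) = k - i by omega, show ((i - 1 : ℕ) : ℤ) = i - 1 by omega]
        push_cast
        rw [show ((k - i : ℕ) : ℤ) = k - i by omega]
        ring
    · intro a ha
      rw [Finset.mem_range, not_lt] at ha
      rw [rq_neg Q (show (n : ℤ) - a < 0 by omega)]; simp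
  have lim1 : Tendsto (fun n : ℕ => ∑' s, rq Q ((n : ℤ) - s 0) * WW q Q (k - i) m s) atTop
      (𝓝 (∑' s, (qPochInf Q Q)⁻¹ * WW q Q (k - i) m s)) := by
    refine tendsto_tsum_of_dominated_convergence hsum ?_ (Eventually.of_forall hb)
    intro s
    refine Tendsto.mul_const _ ?_
    exact (tendsto_rq hQ (-(s 0))).congr (fun n => by rw [sub_eq_add_neg])
  have lim2 := (tendsto_qPoch hQ (-q)).mul
    (SS_lim hQ _ (theta_summable hq0 hq k (k - i) (by omega)))
  simp only [fin] at lim1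
  have := tendsto_nhds_unique lim1 lim2
  rw [tsum_mul_left] at this
  have hne := qPochInf_ne_s10 hQ hQ
  field_simp at this ⊢
  linear_combination this

lemma VV_explicit (Q : ℂ) (d m : ℕ) (t : ℕ → ℕ) :
    VV Q d m (t 0) (fun j => t (j + 1)) =
      Q ^ (∑ j ∈ Finset.range m, t (j + 1) ^ 2 + ∑ j ∈ Finset.Ico (m - d) m, t (j + 1)) *
        (∏ j ∈ Finset.range m, rq Q ((t j : ℤ) - t (j + 1))) * (qPoch (Q ^ 2) (Q ^ 2) (t m))⁻¹ := by
  induction m generalizing t with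
  | zero => simp [VV]
  | succ m ih =>
    have h := ih (fun j => t (j + 1))
    rw [VV]
    have e1 : Fin.tail (fun j : Fin (m + 1) => t (j + 1)) = fun j : Fin m => t (j + 1 + 1) := by
      funext j; simp [Fin.tail]
    simp only [e1, Fin.val_zero, zero_add] at h ⊢
    rw [h, Finset.sum_range_succ', Finset.prod_range_succ']
    have e2 : ∑ j ∈ Finset.Ico (m + 1 - d) (m + 1), t (j + 1) =
        (if m < d then 1 else 0) * t 1 + ∑ j ∈ Finset.Ico (m - d) m, t (j + 1 + 1) := by
      split_ifs with hd
      · rw [show m + 1 - d = 0 by omega, show m - d = 0 by omega, ← Finset.range_eq_Ico,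
          ← Finset.range_eq_Ico, Finset.sum_range_succ']
        ring
      · rw [show m + 1 - d = (m - d) + 1 by omega,
          ← Finset.sum_Ico_add' (fun j => t (j + 1))]
        ring
    rw [e2]
    simp only [pow_add, zero_add]
    ring

/-- The combined Bressoud–Göllnitz–Gordon identity (with `q` replaced by `q²`).
The tuple `s` encodes `s_0 ≥ s_1 ≥ ⋯ ≥ s_{k-1} ≥ 0` via `s_m = t m`. -/
theorem bressoud_gollnitz_gordon (q : ℂ) (h0 : 0 < ‖q‖) (h1 : ‖q‖ < 1)
    (k i : ℕ) (hk : 1 ≤ k) (hi1 : 1 ≤ i) (hik : i ≤ k) :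
    (∑' s : {s : Fin k → ℕ // Antitone s},
      (let t : ℕ → ℕ := fun m => if h : m < k then s.1 ⟨m, h⟩ else 0
       qPoch (-q) (q ^ 2) (t 0) *
         q ^ ((t 0) ^ 2 + 2 * ∑ m ∈ Finset.Ico 1 k, (t m) ^ 2 +
              2 * ∑ m ∈ Finset.Ico i k, t m) /
         ((∏ m ∈ Finset.range (k - 1), qPoch (q ^ 2) (q ^ 2) (t m - t (m + 1))) *
           qPoch (q ^ 4) (q ^ 4) (t (k - 1))))) =
      qPochInf (-q) (q ^ 2) / qPochInf (q ^ 2) (q ^ 2) *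
        (qPochInf (q ^ (4 * k + 2)) (q ^ (4 * k + 2)) *
          qPochInf (q ^ (2 * i + 1)) (q ^ (4 * k + 2)) *
          qPochInf (q ^ (4 * k - 2 * i + 1)) (q ^ (4 * k + 2))) := by
  have hq0 : q ≠ 0 := norm_pos_iff.mp h0
  obtain ⟨m, rfl⟩ : ∃ m, k = m + 1 := ⟨k - 1, by omega⟩
  rw [← theta_prod hq0 h1 (m + 1) i hi1 hik, ← WW_sum hq0 h1 (m + 1) i m hi1 hik rfl]
  have hW : ∀ s : Fin (m + 1) → ℕ, WW q (q ^ 2) (m + 1 - i) m s =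
      let t : ℕ → ℕ := fun j => if h : j < m + 1 then s ⟨j, h⟩ else 0
      qPoch (-q) (q ^ 2) (t 0) * q ^ (t 0 ^ 2) *
        ((q ^ 2) ^ (∑ j ∈ Finset.range m, t (j + 1) ^ 2 +
          ∑ j ∈ Finset.Ico (m - (m + 1 - i)) m, t (j + 1)) *
        (∏ j ∈ Finset.range m, rq (q ^ 2) ((t j : ℤ) - t (j + 1))) *
          (qPoch ((q ^ 2) ^ 2) ((q ^ 2) ^ 2) (t m))⁻¹) := by
    intro s
    let t : ℕ → ℕ := fun j => if h : j < m + 1 then s ⟨j, h⟩ else 0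
    change WW q (q ^ 2) (m + 1 - i) m s = qPoch (-q) (q ^ 2) (t 0) * q ^ (t 0 ^ 2) *
        ((q ^ 2) ^ (∑ j ∈ Finset.range m, t (j + 1) ^ 2 +
          ∑ j ∈ Finset.Ico (m - (m + 1 - i)) m, t (j + 1)) *
        (∏ j ∈ Finset.range m, rq (q ^ 2) ((t j : ℤ) - t (j + 1))) *
          (qPoch ((q ^ 2) ^ 2) ((q ^ 2) ^ 2) (t m))⁻¹)
    rw [← VV_explicit, WW]
    have e0 : s 0 = t 0 := by simp [t]
    have e1 : Fin.tail s = fun j : Fin m => t (j + 1) := by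
      funext j
      simp [t, Fin.tail, Fin.succ]
    rw [e0, e1]
  have hsupp : Function.support (WW q (q ^ 2) (m + 1 - i) m) ⊆ {s | Antitone s} := by
    intro s hs
    rw [Function.mem_support, hW] at hs
    have hs2 := left_ne_zero_of_mul (right_ne_zero_of_mul hs)
    have hs3 := right_ne_zero_of_mul hs2
    rw [Finset.prod_ne_zero_iff] at hs3
    rw [Set.mem_ofPred_eq, Fin.antitone_iff_succ_le]
    intro j
    by_contra hlt
    apply hs3 j (Finset.mem_range.mpr j.2)
    apply rq_neg
    rw [not_le] at hlt
    have a1 : (j : ℕ) < m + 1 := by omega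
    have a2 : (j : ℕ) + 1 < m + 1 := by omega
    beta_reduce
    rw [dif_pos a1, dif_pos a2, sub_neg]
    exact_mod_cast hlt
  rw [← tsum_subtype_eq_of_support_subset hsupp]
  apply tsum_congr
  rintro ⟨s, hs⟩
  rw [hW]
  let t : ℕ → ℕ := fun j => if h : j < m + 1 then s ⟨j, h⟩ else 0
  change qPoch (-q) (q ^ 2) (t 0) *
      q ^ ((t 0) ^ 2 + 2 * ∑ j ∈ Finset.Ico 1 (m + 1), (t j) ^ 2 +
        2 * ∑ j ∈ Finset.Ico i (m + 1), t j) /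
      ((∏ j ∈ Finset.range m, qPoch (q ^ 2) (q ^ 2) (t j - t (j + 1))) *
        qPoch (q ^ 4) (q ^ 4) (t m)) =
    qPoch (-q) (q ^ 2) (t 0) * q ^ (t 0 ^ 2) *
        ((q ^ 2) ^ (∑ j ∈ Finset.range m, t (j + 1) ^ 2 +
          ∑ j ∈ Finset.Ico (m - (m + 1 - i)) m, t (j + 1)) *
        (∏ j ∈ Finset.range m, rq (q ^ 2) ((t j : ℤ) - t (j + 1))) *
          (qPoch ((q ^ 2) ^ 2) ((q ^ 2) ^ 2) (t m))⁻¹)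
  have ht : ∀ j < m, t (j + 1) ≤ t j := by
    intro j hj
    simp only [t]
    rw [dif_pos (by omega), dif_pos (by omega)]
    exact hs (Fin.mk_le_mk.mpr (by omega))
  have p1 : ∏ j ∈ Finset.range m, rq (q ^ 2) ((t j : ℤ) - t (j + 1)) =
      (∏ j ∈ Finset.range m, qPoch (q ^ 2) (q ^ 2) (t j - t (j + 1)))⁻¹ := by
    rw [← Finset.prod_inv_distrib]
    apply Finset.prod_congr rfl
    intro j hj
    rw [← Nat.cast_sub (ht j (Finset.mem_range.mp hj)), rq_nat]
  have p2 : ∑ j ∈ Finset.Ico 1 (m + 1), t j ^ 2 = ∑ j ∈ Finset.range m, t (j + 1) ^ 2 := by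
    rw [Finset.range_eq_Ico, Finset.sum_Ico_add' (fun j => t j ^ 2)]
  have p3 : ∑ j ∈ Finset.Ico i (m + 1), t j =
      ∑ j ∈ Finset.Ico (m - (m + 1 - i)) m, t (j + 1) := by
    rw [Finset.sum_Ico_add' (fun j => t j)]
    congr 2; omega
  rw [p1, p2, p3, show (q ^ 2) ^ 2 = q ^ 4 by ring, ← pow_mul, div_eq_mul_inv, mul_inv,
    add_assoc, pow_add, mul_add 2]
  ring
end
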